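/- Let n ≥ 1, let b ≥ 1 be an integer, α ∈ (1/2, 1], and let p(·) ∈ P^log([0,∞)) with b+1 < p⁻ ≤ p⁺ < ∞. Let q ∈ (1,∞) be a constant with q > nb/(2α) such that for a.e. t ≥ 0: b/p(t) + nb/(2αq) < 1 ≤ (b+1)/p(t) + nb/(2αq). Let q̄(·) ∈ P^emb_q(ℝ^n), let u₀ ∈ L^{q̄(·)}(ℝ^n), and let f : (0,∞)×ℝ^n → ℝ be measurable with ∫_0^∞ ‖f(s,·)‖_{L^{q̄(·)}(ℝ^n)} ds < ∞. Then there exist T ∈ (0,∞), R > 0, and a measurable u : [0,T]×ℝ^n → ℝ with ‖u‖_{E_T} ≤ R which is a mild solution (with γ = 0) of ∂_t u + (−Δ)^α u = |u|^b u + f with data u₀ on [0,T], and u is the unique mild solution on [0,T] satisfying ‖u‖_{E_T} ≤ R. -/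

import Mathlib

open MeasureTheory Set
open scoped ENNReal FourierTransform

noncomputable section

/-- Euclidean space `ℝ^n`. -/
abbrev Rn (n : ℕ) := EuclideanSpace ℝ (Fin n)

/-- Luxemburg norm of an `ℝ≥0∞`-valued function for a variable exponent `p`. -/
def luxNorm {Ω : Type*} [MeasurableSpace Ω] (μ : Measure Ω) (p : Ω → ℝ) (f : Ω → ℝ≥0∞) : ℝ≥0∞ :=
  sInf {lam : ℝ≥0∞ | 0 < lam ∧ ∫⁻ x, (f x / lam) ^ (p x) ∂μ ≤ 1}

/-- Luxemburg norm `‖f‖_{L^{p(·)}}` of a real-valued function. -/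
def luxNormR {Ω : Type*} [MeasurableSpace Ω] (μ : Measure Ω) (p : Ω → ℝ) (f : Ω → ℝ) : ℝ≥0∞ :=
  luxNorm μ p (fun x => ENNReal.ofReal |f x|)

/-- `p(·) ∈ P^log(Ω)`: measurable, with values in `[1,∞)` on `Ω`, locally log-Hölder
continuous on `Ω`, and satisfying the log-Hölder decay condition on `Ω`. -/
def IsPLog {E : Type*} [NormedAddCommGroup E] [MeasurableSpace E] (Ω : Set E) (p : E → ℝ) : Prop :=
  Measurable p ∧ (∀ x ∈ Ω, 1 ≤ p x) ∧
  ∃ C₁ > (0:ℝ), ∃ C₂ > (0:ℝ), ∃ pinf : ℝ,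
    (∀ x ∈ Ω, ∀ y ∈ Ω, x ≠ y →
      |1 / p x - 1 / p y| ≤ C₁ / Real.log (Real.exp 1 + 1 / ‖x - y‖)) ∧
    (∀ x ∈ Ω, |1 / p x - 1 / pinf| ≤ C₂ / Real.log (Real.exp 1 + ‖x‖))

/-- The fractional heat kernel `𝔤_t^α` on `ℝ^n`: the inverse Fourier transform of
`ξ ↦ exp (-t‖ξ‖^{2α})` (it is real-valued; we take the real part). -/
def gKer (n : ℕ) (α t : ℝ) (x : Rn n) : ℝ :=
  (𝓕⁻ (fun ξ : Rn n => (Real.exp (-t * ‖ξ‖ ^ (2 * α)) : ℂ)) x).re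

/-- Convolution on `ℝ^n`. -/
def conv (n : ℕ) (g f : Rn n → ℝ) (x : Rn n) : ℝ := ∫ y, g (x - y) * f y

/-- The class `P^emb_q(ℝ^n)` of variable exponents whose Lebesgue space embeds in `L^q`. -/
def IsPembq (n : ℕ) (q : ℝ) (qb : Rn n → ℝ) : Prop :=
  IsPLog univ qb ∧ q ≤ essInf qb volume ∧
  (∃ M : ℝ, ∀ᵐ x ∂(volume : Measure (Rn n)), qb x ≤ M) ∧
  Filter.Tendsto (fun x : Rn n => q * qb x / (qb x - q)) (Filter.cocompact (Rn n)) Filter.atTop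

/-- The Luxemburg-type norm of `E_T = L^{p(·)}([0,T], L^q(ℝ^n))`:
`‖u‖_{E_T} = inf {λ > 0 : ∫_0^T (‖u(t,·)‖_{L^q}/λ)^{p(t)} dt ≤ 1}`. -/
def eNormT (n : ℕ) (p : ℝ → ℝ) (q T : ℝ) (u : ℝ → Rn n → ℝ) : ℝ≥0∞ :=
  sInf {lam : ℝ≥0∞ | 0 < lam ∧
    ∫⁻ t in Ioc (0:ℝ) T, (eLpNorm (u t) (ENNReal.ofReal q) volume / lam) ^ (p t) ≤ 1}

/-- Mild solution (γ = 0), on the time set `S`, of `∂_t u + (-Δ)^α u = |u|^b u + f`,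
`u(0) = u₀`: for a.e. `(t,x)` with `t ∈ S`, all integrals converge absolutely and the
Duhamel formula holds. -/
def IsMildSol0 (n : ℕ) (α : ℝ) (b : ℕ) (S : Set ℝ) (f : ℝ → Rn n → ℝ) (u₀ : Rn n → ℝ)
    (u : ℝ → Rn n → ℝ) : Prop :=
  ∀ᵐ tx : ℝ × Rn n ∂((volume.restrict S).prod volume),
    Integrable (fun y => gKer n α tx.1 (tx.2 - y) * u₀ y) volume ∧
    IntegrableOn (fun sy : ℝ × Rn n => gKer n α (tx.1 - sy.1) (tx.2 - sy.2) * f sy.1 sy.2)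
      (Ioc 0 tx.1 ×ˢ univ) (volume.prod volume) ∧
    IntegrableOn (fun sy : ℝ × Rn n =>
        gKer n α (tx.1 - sy.1) (tx.2 - sy.2) * (|u sy.1 sy.2| ^ b * u sy.1 sy.2))
      (Ioc 0 tx.1 ×ˢ univ) (volume.prod volume) ∧
    u tx.1 tx.2 = conv n (gKer n α tx.1) u₀ tx.2
      + (∫ s in Ioc (0:ℝ) tx.1, conv n (gKer n α (tx.1 - s)) (f s) tx.2)
      - ∫ s in Ioc (0:ℝ) tx.1, conv n (gKer n α (tx.1 - s)) (fun y => |u s y| ^ b * u s y) tx.2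

section

open Filter Topology ProbabilityTheory
open scoped RealInnerProductSpace

theorem gaussian_cos_integral {n : ℕ} {ε : ℝ} (hε : 0 < ε) (x : Rn n) :
    ∫ ξ : Rn n, Real.exp (-ε * ‖ξ‖ ^ 2) * Real.cos (2 * Real.pi * ⟪ξ, x⟫)
      = (Real.pi / ε) ^ ((n : ℝ) / 2) * Real.exp (-(Real.pi ^ 2 / ε) * ‖x‖ ^ 2) := by
  have hb : 0 < (ε : ℂ).re := by simpa using hε
  have h := GaussianFourier.integral_cexp_neg_mul_sq_norm_add (V := Rn n) hb
    (2 * Real.pi * Complex.I) x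
  have hi := GaussianFourier.integrable_cexp_neg_mul_sq_norm_add (V := Rn n) hb
    (2 * Real.pi * Complex.I) x
  have h2 : ∀ ξ : Rn n, (Complex.exp (-(ε : ℂ) * ‖ξ‖ ^ 2 + 2 * Real.pi * Complex.I * ⟪x, ξ⟫)).re
      = Real.exp (-ε * ‖ξ‖ ^ 2) * Real.cos (2 * Real.pi * ⟪ξ, x⟫) := by
    intro ξ
    have : -(ε : ℂ) * ‖ξ‖ ^ 2 + 2 * Real.pi * Complex.I * ⟪x, ξ⟫
      = ((-ε * ‖ξ‖ ^ 2 : ℝ) : ℂ) + ((2 * Real.pi * ⟪ξ, x⟫ : ℝ) : ℂ) * Complex.I := by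
      rw [real_inner_comm]; push_cast; ring
    rw [this, Complex.exp_add, ← Complex.ofReal_exp, Complex.re_ofReal_mul,
      Complex.exp_ofReal_mul_I_re]
  calc _ = ∫ ξ : Rn n,
        (Complex.exp (-(ε : ℂ) * ‖ξ‖ ^ 2 + 2 * Real.pi * Complex.I * ⟪x, ξ⟫)).re := by
        simp_rw [h2]
    _ = (∫ ξ : Rn n, Complex.exp (-(ε : ℂ) * ‖ξ‖ ^ 2 + 2 * Real.pi * Complex.I * ⟪x, ξ⟫)).re :=
        integral_re hi
    _ = _ := by
        rw [h]
        have e1 : ((Real.pi : ℂ) / ε) ^ ((Module.finrank ℝ (Rn n) : ℂ) / 2)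
            = (((Real.pi / ε) ^ ((n : ℝ) / 2) : ℝ) : ℂ) := by
          rw [Complex.ofReal_cpow (by positivity)]
          simp
        have e2 : (2 * (Real.pi : ℂ) * Complex.I) ^ 2 * ‖x‖ ^ 2 / (4 * ε)
            = ((-(Real.pi ^ 2 / ε) * ‖x‖ ^ 2 : ℝ) : ℂ) := by
          have : (ε : ℂ) ≠ 0 := by exact_mod_cast hε.ne'
          push_cast
          field_simp
          rw [Complex.I_sq]; ring
        rw [e1, e2, ← Complex.ofReal_exp, Complex.re_ofReal_mul, Complex.ofReal_re]

theorem integrable_gaussian {n : ℕ} {ε : ℝ} (hε : 0 < ε) :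
    Integrable (fun ξ : Rn n => Real.exp (-ε * ‖ξ‖ ^ 2)) := by
  have hb : 0 < (ε : ℂ).re := by simpa using hε
  have hi := (GaussianFourier.integrable_cexp_neg_mul_sq_norm_add (V := Rn n) hb 0 0).re
  refine hi.congr (Filter.Eventually.of_forall fun ξ => ?_)
  have : -(ε : ℂ) * ‖ξ‖ ^ 2 + 0 * ((⟪(0 : Rn n), ξ⟫ : ℝ) : ℂ) = ((-ε * ‖ξ‖ ^ 2 : ℝ) : ℂ) := by
    push_cast; ring
  change (Complex.exp (-(ε : ℂ) * ‖ξ‖ ^ 2 + 0 * ((⟪(0 : Rn n), ξ⟫ : ℝ) : ℂ))).re = _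
  rw [this, Complex.exp_ofReal_re]

/-- Functions all of whose Gaussian regularizations have nonnegative cosine transform. -/
structure GaussPos {n : ℕ} (F : Rn n → ℝ) : Prop where
  measurable : Measurable F
  bounded : ∃ B, ∀ ξ, |F ξ| ≤ B
  nonneg : ∀ ε > 0, ∀ x : Rn n,
    0 ≤ ∫ ξ, F ξ * (Real.exp (-ε * ‖ξ‖ ^ 2) * Real.cos (2 * Real.pi * ⟪ξ, x⟫))

theorem integrable_bounded_mul_gaussian_cos {n : ℕ} {F : Rn n → ℝ} (hF : Measurable F)
    {B : ℝ} (hB : ∀ ξ, |F ξ| ≤ B) {ε : ℝ} (hε : 0 < ε) (x : Rn n) :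
    Integrable (fun ξ => F ξ * (Real.exp (-ε * ‖ξ‖ ^ 2) * Real.cos (2 * Real.pi * ⟪ξ, x⟫))) := by
  refine ((integrable_gaussian (n := n) hε).const_mul B).mono' ?_ ?_
  · exact (hF.mul (by fun_prop)).aestronglyMeasurable
  · refine Filter.Eventually.of_forall fun ξ => ?_
    rw [norm_mul, norm_mul, Real.norm_eq_abs, Real.norm_eq_abs, Real.norm_eq_abs, Real.abs_exp]
    calc _ ≤ B * (Real.exp (-ε * ‖ξ‖ ^ 2) * 1) := by
          gcongr
          · exact (abs_nonneg _).trans (hB ξ)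
          · exact hB ξ
          · exact Real.abs_cos_le_one _
      _ = _ := by ring

namespace GaussPos

variable {n : ℕ} {F G : Rn n → ℝ}

theorem one : GaussPos (fun _ : Rn n => (1 : ℝ)) where
  measurable := measurable_const
  bounded := ⟨1, by simp⟩
  nonneg ε hε x := by
    simp only [one_mul]
    rw [gaussian_cos_integral hε]
    positivity

theorem add (hF : GaussPos F) (hG : GaussPos G) : GaussPos (fun ξ => F ξ + G ξ) where
  measurable := hF.measurable.add hG.measurable
  bounded := by
    obtain ⟨A, hA⟩ := hF.bounded
    obtain ⟨B, hB⟩ := hG.bounded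
    exact ⟨A + B, fun ξ => (abs_add_le _ _).trans (add_le_add (hA ξ) (hB ξ))⟩
  nonneg ε hε x := by
    obtain ⟨A, hA⟩ := hF.bounded
    obtain ⟨B, hB⟩ := hG.bounded
    simp only [add_mul]
    rw [integral_add (integrable_bounded_mul_gaussian_cos hF.measurable hA hε x)
      (integrable_bounded_mul_gaussian_cos hG.measurable hB hε x)]
    exact add_nonneg (hF.nonneg ε hε x) (hG.nonneg ε hε x)

theorem const_mul {c : ℝ} (hc : 0 ≤ c) (hF : GaussPos F) : GaussPos (fun ξ => c * F ξ) where
  measurable := hF.measurable.const_mul c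
  bounded := by
    obtain ⟨A, hA⟩ := hF.bounded
    refine ⟨c * A, fun ξ => ?_⟩
    rw [abs_mul, abs_of_nonneg hc]
    exact mul_le_mul_of_nonneg_left (hA ξ) hc
  nonneg ε hε x := by
    simp_rw [mul_assoc c]
    rw [integral_const_mul]
    exact mul_nonneg hc (hF.nonneg ε hε x)

theorem limit {Fk : ℕ → Rn n → ℝ} {B : ℝ} (hk : ∀ k, GaussPos (Fk k)) (hB : ∀ k ξ, |Fk k ξ| ≤ B)
    (hlim : ∀ ξ, Tendsto (fun k => Fk k ξ) atTop (𝓝 (F ξ))) : GaussPos F where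
  measurable := measurable_of_tendsto_metrizable (fun k => (hk k).measurable)
    (tendsto_pi_nhds.2 hlim)
  bounded := ⟨B, fun ξ => le_of_tendsto (hlim ξ).abs (Eventually.of_forall fun k => hB k ξ)⟩
  nonneg ε hε x := by
    refine ge_of_tendsto (x := atTop) (b := 0) (f := fun k => ∫ ξ, Fk k ξ *
      (Real.exp (-ε * ‖ξ‖ ^ 2) * Real.cos (2 * Real.pi * ⟪ξ, x⟫))) ?_
      (Eventually.of_forall fun k => (hk k).nonneg ε hε x)
    refine tendsto_integral_of_dominated_convergence (fun ξ => B * Real.exp (-ε * ‖ξ‖ ^ 2))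
      (fun k => ((hk k).measurable.mul (by fun_prop)).aestronglyMeasurable)
      ((integrable_gaussian hε).const_mul B) (fun k => Eventually.of_forall fun ξ => ?_)
      (Eventually.of_forall fun ξ => (hlim ξ).mul_const _)
    rw [norm_mul, norm_mul, Real.norm_eq_abs, Real.norm_eq_abs, Real.norm_eq_abs, Real.abs_exp]
    calc _ ≤ B * (Real.exp (-ε * ‖ξ‖ ^ 2) * 1) := by
          gcongr
          · exact (abs_nonneg _).trans (hB k ξ)
          · exact hB k ξ
          · exact Real.abs_cos_le_one _
      _ = _ := by ring

/-- A mixture of Gaussians preserves `GaussPos` under multiplication. -/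
theorem mul_mixture (hF : GaussPos F) (ν : Measure ℝ) [IsFiniteMeasure ν]
    (hν : ∀ᵐ y ∂ν, 0 ≤ y) :
    GaussPos (fun ξ => F ξ * ∫ y, Real.exp (-y * ‖ξ‖ ^ 2) ∂ν) where
  measurable := by
    refine hF.measurable.mul ?_
    have : Measurable (Function.uncurry fun (ξ : Rn n) (y : ℝ) => Real.exp (-y * ‖ξ‖ ^ 2)) := by
      unfold Function.uncurry; fun_prop
    exact (this.stronglyMeasurable.integral_prod_right (ν := ν)).measurable
  bounded := by
    obtain ⟨A, hA⟩ := hF.bounded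
    refine ⟨A * ν.real univ, fun ξ => ?_⟩
    rw [abs_mul]
    refine mul_le_mul (hA ξ) ?_ (abs_nonneg _) ((abs_nonneg _).trans (hA ξ))
    have := norm_integral_le_of_norm_le_const (μ := ν) (C := 1)
      (f := fun y => Real.exp (-y * ‖ξ‖ ^ 2)) (by
        filter_upwards [hν] with y hy
        rw [Real.norm_eq_abs, Real.abs_exp, Real.exp_le_one_iff]
        nlinarith [sq_nonneg ‖ξ‖])
    simpa using this
  nonneg ε hε x := by
    obtain ⟨A, hA⟩ := hF.bounded
    have key : ∫ ξ, (F ξ * ∫ y, Real.exp (-y * ‖ξ‖ ^ 2) ∂ν) *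
          (Real.exp (-ε * ‖ξ‖ ^ 2) * Real.cos (2 * Real.pi * ⟪ξ, x⟫))
        = ∫ ξ, ∫ y, F ξ * (Real.exp (-(y + ε) * ‖ξ‖ ^ 2) * Real.cos (2 * Real.pi * ⟪ξ, x⟫)) ∂ν := by
      congr 1
      ext ξ
      rw [mul_assoc, mul_comm (∫ y, Real.exp (-y * ‖ξ‖ ^ 2) ∂ν), ← mul_assoc,
        ← integral_const_mul]
      congr 1
      ext y
      rw [show -(y + ε) * ‖ξ‖ ^ 2 = -y * ‖ξ‖ ^ 2 + -ε * ‖ξ‖ ^ 2 by ring, Real.exp_add]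
      ring
    rw [key, integral_integral_swap]
    · refine integral_nonneg_of_ae ?_
      filter_upwards [hν] with y hy
      exact hF.nonneg (y + ε) (by linarith) x
    · have hi : Integrable (fun z : Rn n × ℝ => A * Real.exp (-ε * ‖z.1‖ ^ 2) * 1)
          (volume.prod ν) :=
        Integrable.mul_prod (f := fun ξ : Rn n => A * Real.exp (-ε * ‖ξ‖ ^ 2))
          (g := fun _ : ℝ => (1 : ℝ)) ((integrable_gaussian hε).const_mul A) (integrable_const _)
      refine hi.mono' ?_ ?_
      · refine Measurable.aestronglyMeasurable ?_
        unfold Function.uncurry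
        exact (hF.measurable.comp measurable_fst).mul (by fun_prop)
      · have hν' : ∀ᵐ z ∂((volume : Measure (Rn n)).prod ν), 0 ≤ z.2 :=
          Measure.quasiMeasurePreserving_snd.ae hν
        filter_upwards [hν'] with z hz
        simp only [Function.uncurry]
        rw [norm_mul, norm_mul, Real.norm_eq_abs, Real.norm_eq_abs, Real.norm_eq_abs, Real.abs_exp,
          mul_one]
        calc _ ≤ A * (Real.exp (-ε * ‖z.1‖ ^ 2) * 1) := by
              gcongr
              · exact (abs_nonneg _).trans (hA z.1)
              · exact hA z.1
              · nlinarith [sq_nonneg ‖z.1‖]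
              · exact Real.abs_cos_le_one _
          _ = _ := by ring

/-- Compound Poisson functions are `GaussPos`. -/
theorem exp_mixture (ν : Measure ℝ) [IsFiniteMeasure ν] (hν : ∀ᵐ y ∂ν, 0 ≤ y)
    {c : ℝ} (hc : 0 ≤ c) :
    GaussPos (fun ξ : Rn n => Real.exp (c * ∫ y, Real.exp (-y * ‖ξ‖ ^ 2) ∂ν)) := by
  set m : Rn n → ℝ := fun ξ => ∫ y, Real.exp (-y * ‖ξ‖ ^ 2) ∂ν with hm
  have hpow : ∀ k j : ℕ, GaussPos (fun ξ => (1 + c * m ξ / k) ^ j) := by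
    intro k j
    induction j with
    | zero => simpa using one
    | succ j ih =>
      have := ih.add ((ih.mul_mixture ν hν).const_mul (c := c / k) (by positivity))
      convert this using 2 with ξ
      simp only [hm]
      ring
  have hm0 : ∀ ξ, 0 ≤ m ξ := fun ξ => integral_nonneg fun y => (Real.exp_pos _).le
  have hm1 : ∀ ξ, m ξ ≤ ν.real univ := by
    intro ξ
    have := norm_integral_le_of_norm_le_const (μ := ν) (C := 1)
      (f := fun y => Real.exp (-y * ‖ξ‖ ^ 2)) (by
        filter_upwards [hν] with y hy
        rw [Real.norm_eq_abs, Real.abs_exp, Real.exp_le_one_iff]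
        nlinarith [sq_nonneg ‖ξ‖])
    rw [one_mul] at this
    exact (le_abs_self _).trans this
  refine limit (B := Real.exp (c * ν.real univ)) (fun k => hpow k k) (fun k ξ => ?_)
    (fun ξ => Real.tendsto_one_add_div_pow_exp (c * m ξ))
  have h0 : 0 ≤ c * m ξ := mul_nonneg hc (hm0 ξ)
  rw [abs_of_nonneg (by positivity)]
  calc (1 + c * m ξ / k) ^ k ≤ (Real.exp (c * m ξ / k)) ^ k := by
        gcongr
        rw [add_comm]; exact Real.add_one_le_exp _
    _ = Real.exp (k * (c * m ξ / k)) := by rw [Real.exp_nat_mul]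
    _ ≤ Real.exp (c * m ξ) := by
        apply Real.exp_le_exp.2
        rcases Nat.eq_zero_or_pos k with rfl | hk
        · simpa using h0
        · have : (k : ℝ) ≠ 0 := by positivity
          field_simp; exact le_rfl
    _ ≤ _ := Real.exp_le_exp.2 (mul_le_mul_of_nonneg_left (hm1 ξ) hc)

end GaussPos

theorem levy_integrableOn {a : ℝ} (ha0 : 0 < a) (ha1 : a < 1) {s : ℝ} (hs : 0 ≤ s) :
    IntegrableOn (fun y : ℝ => (1 - Real.exp (-(y * s))) * y ^ (-1 - a)) (Ioi 0) := by
  have hmeas : ∀ S : Set ℝ, AEStronglyMeasurable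
      (fun y : ℝ => (1 - Real.exp (-(y * s))) * y ^ (-1 - a)) (volume.restrict S) := fun S =>
    Measurable.aestronglyMeasurable (by fun_prop)
  rw [← Ioc_union_Ioi_eq_Ioi zero_le_one]
  refine IntegrableOn.union ?_ ?_
  · have h1 : IntegrableOn (fun y : ℝ => s * y ^ (-a)) (Ioc 0 1) := by
      have := (intervalIntegral.intervalIntegrable_rpow' (a := 0) (b := 1) (r := -a)
        (by linarith)).1
      exact this.const_mul s
    refine h1.mono' (hmeas _) ?_
    filter_upwards [ae_restrict_mem measurableSet_Ioc] with y hy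
    have hy0 : 0 < y := hy.1
    have h2 : 0 ≤ 1 - Real.exp (-(y * s)) := by
      rw [sub_nonneg, Real.exp_le_one_iff]
      have := mul_nonneg hy0.le hs; linarith
    have h3 : 1 - Real.exp (-(y * s)) ≤ y * s := by
      have := Real.add_one_le_exp (-(y * s)); linarith
    rw [Real.norm_eq_abs, abs_of_nonneg (by positivity)]
    calc _ ≤ (y * s) * y ^ (-1 - a) := by gcongr
      _ = s * (y ^ (1 : ℝ) * y ^ (-1 - a)) := by rw [Real.rpow_one]; ring
      _ = _ := by rw [← Real.rpow_add hy0]; ring_nf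
  · have h1 : IntegrableOn (fun y : ℝ => y ^ (-1 - a)) (Ioi 1) :=
      integrableOn_Ioi_rpow_of_lt (by linarith) one_pos
    refine h1.mono' (hmeas _) ?_
    filter_upwards [ae_restrict_mem measurableSet_Ioi] with y hy
    have hy0 : (0 : ℝ) < y := one_pos.trans hy
    have h2 : 0 ≤ 1 - Real.exp (-(y * s)) := by
      rw [sub_nonneg, Real.exp_le_one_iff]
      have := mul_nonneg hy0.le hs; linarith
    have h3 : 1 - Real.exp (-(y * s)) ≤ 1 := by
      have := Real.exp_pos (-(y * s)); linarith
    rw [Real.norm_eq_abs, abs_of_nonneg (by positivity)]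
    exact mul_le_of_le_one_left (by positivity) h3

theorem levy_scaling {a : ℝ} (ha0 : 0 < a) {s : ℝ} (hs : 0 ≤ s) :
    ∫ y in Ioi (0 : ℝ), (1 - Real.exp (-(y * s))) * y ^ (-1 - a)
      = s ^ a * ∫ y in Ioi (0 : ℝ), (1 - Real.exp (-y)) * y ^ (-1 - a) := by
  rcases hs.eq_or_lt with rfl | hs
  · simp [Real.zero_rpow ha0.ne']
  have h := integral_comp_mul_left_Ioi (fun y : ℝ => (1 - Real.exp (-y)) * y ^ (-1 - a)) 0 hs
  rw [mul_zero, smul_eq_mul] at h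
  have h2 : ∫ y in Ioi (0 : ℝ), (1 - Real.exp (-(s * y))) * (s * y) ^ (-1 - a)
      = s ^ (-1 - a) * ∫ y in Ioi (0 : ℝ), (1 - Real.exp (-(y * s))) * y ^ (-1 - a) := by
    rw [← integral_const_mul]
    refine setIntegral_congr_fun measurableSet_Ioi fun y hy => ?_
    have hy' : (0 : ℝ) < y := hy
    rw [Real.mul_rpow hs.le hy'.le, mul_comm s y]
    ring
  rw [h2] at h
  have h3 : s ^ a * s ^ (-1 - a) = s⁻¹ := by
    rw [← Real.rpow_add hs, ← Real.rpow_neg_one]; ring_nf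
  have h4 : s ^ (1 + a) * s ^ (-1 - a) = 1 := by
    rw [← Real.rpow_add hs]; ring_nf; exact Real.rpow_zero _
  have h5 : s ^ (1 + a) * s⁻¹ = s ^ a := by
    rw [← Real.rpow_neg_one, ← Real.rpow_add hs]; ring_nf
  calc _ = (s ^ (1 + a) * s ^ (-1 - a)) *
        ∫ y in Ioi (0 : ℝ), (1 - Real.exp (-(y * s))) * y ^ (-1 - a) := by rw [h4, one_mul]
    _ = _ := by rw [mul_assoc, h, ← mul_assoc, h5]

theorem levy_const_pos {a : ℝ} (ha0 : 0 < a) (ha1 : a < 1) :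
    0 < ∫ y in Ioi (0 : ℝ), (1 - Real.exp (-y)) * y ^ (-1 - a) := by
  have hi := levy_integrableOn ha0 ha1 zero_le_one
  simp only [mul_one] at hi
  rw [setIntegral_pos_iff_support_of_nonneg_ae _ hi]
  · refine lt_of_lt_of_le (b := volume (Ioi (0 : ℝ))) (by simp) (measure_mono fun y hy => ?_)
    have hy' : (0 : ℝ) < y := hy
    refine ⟨?_, hy⟩
    have : Real.exp (-y) < 1 := by rw [Real.exp_lt_one_iff]; linarith
    exact (mul_pos (by linarith) (by positivity)).ne'
  · filter_upwards [ae_restrict_mem measurableSet_Ioi] with y hy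
    have hy' : (0 : ℝ) < y := hy
    have : Real.exp (-y) < 1 := by rw [Real.exp_lt_one_iff]; linarith
    exact (mul_pos (by linarith) (by positivity)).le

theorem gaussPos_exp_neg_rpow {n : ℕ} {a : ℝ} (ha0 : 0 < a) (ha1 : a < 1) {t : ℝ} (ht : 0 ≤ t) :
    GaussPos (fun ξ : Rn n => Real.exp (-t * (‖ξ‖ ^ 2) ^ a)) := by
  set c := ∫ y in Ioi (0 : ℝ), (1 - Real.exp (-y)) * y ^ (-1 - a) with hc
  have hc0 : 0 < c := levy_const_pos ha0 ha1
  set S : ℕ → Set ℝ := fun k => Ioi (1 / ((k : ℝ) + 1)) with hS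
  have hSpos : ∀ k, ∀ y ∈ S k, 0 < y := fun k y hy => lt_trans (by positivity) hy
  have hiS : ∀ k, IntegrableOn (fun y : ℝ => y ^ (-1 - a)) (S k) := fun k =>
    integrableOn_Ioi_rpow_of_lt (by linarith) (by positivity)
  set ν : ℕ → Measure ℝ := fun k =>
    (volume.restrict (S k)).withDensity (fun y => ENNReal.ofReal (y ^ (-1 - a))) with hν
  have hfin : ∀ k, IsFiniteMeasure (ν k) := fun k =>
    isFiniteMeasure_withDensity_ofReal (hiS k).2
  have hνpos : ∀ k, ∀ᵐ y ∂(ν k), 0 ≤ y := fun k => by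
    refine (withDensity_absolutelyContinuous _ _).ae_le ?_
    filter_upwards [ae_restrict_mem measurableSet_Ioi] with y hy using (hSpos k y hy).le
  have hInt : ∀ k (g : ℝ → ℝ), ∫ y, g y ∂(ν k) = ∫ y in S k, y ^ (-1 - a) * g y := by
    intro k g
    rw [integral_withDensity_eq_integral_toReal_smul (by fun_prop) (by simp)]
    refine setIntegral_congr_fun measurableSet_Ioi fun y hy => ?_
    have := hSpos k y hy
    simp only [smul_eq_mul]
    rw [ENNReal.toReal_ofReal (by positivity)]
  have hIk : ∀ k (s : ℝ), 0 ≤ s → ∫ y in S k, (1 - Real.exp (-(y * s))) * y ^ (-1 - a)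
      = (ν k).real univ - ∫ y, Real.exp (-y * s) ∂(ν k) := by
    intro k s hs
    have h1 : (ν k).real univ = ∫ y, (1 : ℝ) ∂(ν k) := by simp
    rw [h1, ← integral_sub (integrable_const _), hInt]
    · refine setIntegral_congr_fun measurableSet_Ioi fun y hy => ?_
      rw [neg_mul]; ring
    · refine (integrable_const (1 : ℝ)).mono' (Measurable.aestronglyMeasurable (by fun_prop)) ?_
      filter_upwards [hνpos k] with y hy
      rw [Real.norm_eq_abs, Real.abs_exp, Real.exp_le_one_iff]
      nlinarith
  have hlim : ∀ s : ℝ, 0 ≤ s → Tendsto (fun k => ∫ y in S k,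
      (1 - Real.exp (-(y * s))) * y ^ (-1 - a)) atTop (𝓝 (s ^ a * c)) := by
    intro s hs
    have hU : (⋃ k, S k) = Ioi 0 := by
      ext y
      simp only [mem_iUnion, mem_Ioi, hS]
      constructor
      · rintro ⟨k, hk⟩; exact hSpos k y hk
      · intro hy; exact exists_nat_one_div_lt hy
    rw [hc, ← levy_scaling ha0 hs, ← hU]
    refine tendsto_setIntegral_of_monotone (fun k => measurableSet_Ioi) ?_ ?_
    · intro i j hij
      refine Ioi_subset_Ioi ?_
      exact Nat.one_div_le_one_div hij
    · rw [hU]; exact levy_integrableOn ha0 ha1 hs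
  refine GaussPos.limit (B := 1) (Fk := fun k ξ => Real.exp (-(t / c) *
    ∫ y in S k, (1 - Real.exp (-(y * ‖ξ‖ ^ 2))) * y ^ (-1 - a))) (fun k => ?_) ?_ ?_
  · have := (GaussPos.exp_mixture (n := n) (ν k) (hνpos k) (c := t / c) (by positivity)).const_mul
      (c := Real.exp (-(t / c) * (ν k).real univ)) (Real.exp_pos _).le
    convert this using 2 with ξ
    rw [← Real.exp_add, hIk k _ (sq_nonneg _)]
    congr 1
    ring
  · intro k ξ
    rw [Real.abs_exp, Real.exp_le_one_iff, neg_mul, neg_nonpos]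
    refine mul_nonneg (by positivity) (setIntegral_nonneg measurableSet_Ioi fun y hy => ?_)
    have hy' := hSpos k y hy
    have : Real.exp (-(y * ‖ξ‖ ^ 2)) ≤ 1 := by
      rw [Real.exp_le_one_iff, neg_nonpos]; positivity
    exact mul_nonneg (by linarith) (by positivity)
  · intro ξ
    have h := ((hlim (‖ξ‖ ^ 2) (sq_nonneg _)).const_mul (-(t / c))).rexp
    have e : -(t / c) * ((‖ξ‖ ^ 2) ^ a * c) = -t * (‖ξ‖ ^ 2) ^ a := by
      field_simp
    rwa [e] at h

theorem integrable_heatSymbol {n : ℕ} (hn : 1 ≤ n) {α t : ℝ} (hα : 0 < α) (ht : 0 < t) :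
    Integrable (fun ξ : Rn n => Real.exp (-t * ‖ξ‖ ^ (2 * α))) := by
  have : Nonempty (Fin n) := ⟨⟨0, hn⟩⟩
  have h := integrableOn_rpow_mul_exp_neg_mul_rpow (p := 2 * α) (s := ((n - 1 : ℕ) : ℝ)) (b := t)
    (by have : (0 : ℝ) ≤ ((n - 1 : ℕ) : ℝ) := by positivity
        linarith) (by linarith) ht
  refine (integrable_fun_norm_addHaar (E := Rn n) (μ := volume)
    (f := fun r : ℝ => Real.exp (-t * r ^ (2 * α)))).2 ?_
  simpa [Real.rpow_natCast] using h

theorem fourierInv_heatSymbol {n : ℕ} (hn : 1 ≤ n) {α t : ℝ} (hα : 0 < α) (ht : 0 < t) (x : Rn n) :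
    𝓕⁻ (fun ξ : Rn n => (Real.exp (-t * ‖ξ‖ ^ (2 * α)) : ℂ)) x
      = ((∫ ξ : Rn n, Real.exp (-t * ‖ξ‖ ^ (2 * α)) * Real.cos (2 * Real.pi * ⟪ξ, x⟫) : ℝ) : ℂ) := by
  have hi := integrable_heatSymbol hn hα ht
  have h0 : ∀ g : ℝ → ℝ, Measurable g → (∀ r, |g r| ≤ 1) → Integrable (fun ξ : Rn n =>
      Real.exp (-t * ‖ξ‖ ^ (2 * α)) * g (2 * Real.pi * ⟪ξ, x⟫)) := by
    intro g hg hb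
    refine hi.mono' (Measurable.aestronglyMeasurable ?_) (Eventually.of_forall fun ξ => ?_)
    · exact Measurable.mul (by fun_prop) (hg.comp (by fun_prop))
    · rw [norm_mul, Real.norm_eq_abs, Real.norm_eq_abs, Real.abs_exp]
      exact mul_le_of_le_one_right (Real.exp_pos _).le (hb _)
  have hs : ∫ ξ : Rn n, Real.exp (-t * ‖ξ‖ ^ (2 * α)) * Real.sin (2 * Real.pi * ⟪ξ, x⟫) = 0 := by
    have := integral_neg_eq_self
      (fun ξ : Rn n => Real.exp (-t * ‖ξ‖ ^ (2 * α)) * Real.sin (2 * Real.pi * ⟪ξ, x⟫)) volume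
    simp only [norm_neg, inner_neg_left, mul_neg, Real.sin_neg, integral_neg] at this
    linarith
  rw [Real.fourierInv_eq']
  have e : ∀ ξ : Rn n, Complex.exp (((2 * Real.pi * ⟪ξ, x⟫ : ℝ) : ℂ) * Complex.I)
      • (Real.exp (-t * ‖ξ‖ ^ (2 * α)) : ℂ)
      = ((Real.exp (-t * ‖ξ‖ ^ (2 * α)) * Real.cos (2 * Real.pi * ⟪ξ, x⟫) : ℝ) : ℂ)
        + ((Real.exp (-t * ‖ξ‖ ^ (2 * α)) * Real.sin (2 * Real.pi * ⟪ξ, x⟫) : ℝ) : ℂ)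
          * Complex.I := by
    intro ξ
    rw [Complex.exp_mul_I, smul_eq_mul]
    push_cast
    ring
  simp_rw [e]
  rw [integral_add (h0 _ Real.measurable_cos Real.abs_cos_le_one).ofReal
    ((h0 _ Real.measurable_sin Real.abs_sin_le_one).ofReal.mul_const _), integral_mul_const,
    integral_complex_ofReal, integral_complex_ofReal, hs]
  simp

theorem gKer_eq {n : ℕ} (hn : 1 ≤ n) {α t : ℝ} (hα : 0 < α) (ht : 0 < t) (x : Rn n) :
    gKer n α t x
      = ∫ ξ : Rn n, Real.exp (-t * ‖ξ‖ ^ (2 * α)) * Real.cos (2 * Real.pi * ⟪ξ, x⟫) := by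
  rw [gKer, fourierInv_heatSymbol hn hα ht, Complex.ofReal_re]

theorem fourierInv_eq_gKer {n : ℕ} (hn : 1 ≤ n) {α t : ℝ} (hα : 0 < α) (ht : 0 < t) :
    𝓕⁻ (fun ξ : Rn n => (Real.exp (-t * ‖ξ‖ ^ (2 * α)) : ℂ)) = fun x => (gKer n α t x : ℂ) := by
  ext x
  rw [gKer, fourierInv_heatSymbol hn hα ht, Complex.ofReal_re]

theorem measurable_gKer (n : ℕ) (α : ℝ) : Measurable (Function.uncurry (gKer n α)) := by
  have h : Measurable (Function.uncurry fun (z : ℝ × Rn n) (ξ : Rn n) =>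
      Complex.exp (((2 * Real.pi * ⟪ξ, z.2⟫ : ℝ) : ℂ) * Complex.I)
        • (Real.exp (-z.1 * ‖ξ‖ ^ (2 * α)) : ℂ)) := by
    unfold Function.uncurry
    fun_prop
  have := (h.stronglyMeasurable.integral_prod_right (ν := volume)).measurable
  have e : Function.uncurry (gKer n α) = fun z : ℝ × Rn n => (∫ ξ : Rn n,
      Complex.exp (((2 * Real.pi * ⟪ξ, z.2⟫ : ℝ) : ℂ) * Complex.I)
        • (Real.exp (-z.1 * ‖ξ‖ ^ (2 * α)) : ℂ)).re := by
    ext z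
    rw [Function.uncurry, gKer, Real.fourierInv_eq']
  rw [e]
  exact Complex.measurable_re.comp this

theorem gKer_nonneg {n : ℕ} (hn : 1 ≤ n) {α t : ℝ} (hα : 0 < α ∧ α ≤ 1) (ht : 0 < t) (x : Rn n) :
    0 ≤ gKer n α t x := by
  rw [gKer_eq hn hα.1 ht]
  rcases hα.2.lt_or_eq with h1 | rfl
  · have hpos := gaussPos_exp_neg_rpow (n := n) hα.1 h1 ht.le
    have hi := integrable_heatSymbol hn hα.1 ht
    refine ge_of_tendsto (x := atTop) (b := 0) (f := fun k : ℕ => ∫ ξ : Rn n,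
      Real.exp (-t * (‖ξ‖ ^ 2) ^ α) * (Real.exp (-(1 / ((k : ℝ) + 1)) * ‖ξ‖ ^ 2) *
        Real.cos (2 * Real.pi * ⟪ξ, x⟫))) ?_
      (Eventually.of_forall fun k => hpos.nonneg _ (by positivity) x)
    refine tendsto_integral_of_dominated_convergence
      (fun ξ => Real.exp (-t * ‖ξ‖ ^ (2 * α)))
      (fun k => Measurable.aestronglyMeasurable (by fun_prop)) hi
      (fun k => Eventually.of_forall fun ξ => ?_) (Eventually.of_forall fun ξ => ?_)
    · rw [norm_mul, norm_mul, Real.norm_eq_abs, Real.norm_eq_abs, Real.norm_eq_abs, Real.abs_exp,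
        Real.abs_exp, ← Real.rpow_natCast, ← Real.rpow_mul (norm_nonneg _), Nat.cast_ofNat]
      refine mul_le_of_le_one_right (Real.exp_pos _).le
        (mul_le_one₀ ?_ (abs_nonneg _) (Real.abs_cos_le_one _))
      rw [Real.exp_le_one_iff, neg_mul, neg_nonpos]
      positivity
    · have e : ‖ξ‖ ^ (2 * α) = (‖ξ‖ ^ 2) ^ α := by
        rw [← Real.rpow_natCast, ← Real.rpow_mul (norm_nonneg _), Nat.cast_ofNat]
      rw [e]
      refine Tendsto.const_mul _ ?_
      have h := ((tendsto_one_div_add_atTop_nhds_zero_nat (𝕜 := ℝ)).neg.mul_const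
        (‖ξ‖ ^ 2)).rexp.mul_const (Real.cos (2 * Real.pi * ⟪ξ, x⟫))
      simpa using h
  · have := (GaussPos.one (n := n)).nonneg t ht x
    simpa using this

theorem lintegral_gKer_le_one {n : ℕ} (hn : 1 ≤ n) {α t : ℝ} (hα : 0 < α ∧ α ≤ 1) (ht : 0 < t) :
    ∫⁻ x, ENNReal.ofReal (gKer n α t x) ≤ 1 := by
  have hi := integrable_heatSymbol hn hα.1 ht
  have hm : Measurable (gKer n α t) := (measurable_gKer n α).of_uncurry_left
  have hbound : ∀ δ : ℝ, 0 < δ →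
      ∫⁻ x, ENNReal.ofReal (gKer n α t x * Real.exp (-δ * ‖x‖ ^ 2)) ≤ 1 := by
    intro δ hδ
    have hI : Integrable (fun z : Rn n × Rn n => Real.exp (-t * ‖z.2‖ ^ (2 * α)) *
        (Real.exp (-δ * ‖z.1‖ ^ 2) * Real.cos (2 * Real.pi * ⟪z.1, z.2⟫)))
        (volume.prod volume) := by
      have := (integrable_gaussian (n := n) hδ).mul_prod hi
      refine this.mono' (Measurable.aestronglyMeasurable (by fun_prop))
        (Eventually.of_forall fun z => ?_)
      rw [norm_mul, norm_mul, Real.norm_eq_abs, Real.norm_eq_abs, Real.norm_eq_abs, Real.abs_exp,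
        Real.abs_exp, mul_comm (Real.exp (-δ * ‖z.1‖ ^ 2)) (Real.exp _)]
      exact mul_le_mul_of_nonneg_left (mul_le_of_le_one_right (Real.exp_pos _).le
        (Real.abs_cos_le_one _)) (Real.exp_pos _).le
    have e1 : ∀ x : Rn n, gKer n α t x * Real.exp (-δ * ‖x‖ ^ 2)
        = ∫ ξ : Rn n, Real.exp (-t * ‖ξ‖ ^ (2 * α)) *
        (Real.exp (-δ * ‖x‖ ^ 2) * Real.cos (2 * Real.pi * ⟪x, ξ⟫)) := by
      intro x
      rw [gKer_eq hn hα.1 ht, ← integral_mul_const]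
      congr 1
      ext ξ
      rw [real_inner_comm]
      ring
    have hInt : Integrable (fun x => gKer n α t x * Real.exp (-δ * ‖x‖ ^ 2)) := by
      simp_rw [e1]
      exact hI.integral_prod_left
    rw [← ofReal_integral_eq_lintegral_ofReal hInt
      (Eventually.of_forall fun x => mul_nonneg (gKer_nonneg hn hα ht x) (Real.exp_pos _).le)]
    rw [← ENNReal.ofReal_one]
    apply ENNReal.ofReal_le_ofReal
    simp_rw [e1]
    rw [integral_integral_swap hI]
    simp_rw [integral_const_mul, gaussian_cos_integral hδ]
    have hδ' : 0 < Real.pi ^ 2 / δ := by positivity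
    have hg := gaussian_cos_integral (n := n) hδ' 0
    simp only [inner_zero_right, mul_zero, Real.cos_zero, mul_one, norm_zero, ne_eq,
      OfNat.ofNat_ne_zero, not_false_eq_true, zero_pow, Real.exp_zero] at hg
    calc _ ≤ ∫ ξ : Rn n, (Real.pi / δ) ^ ((n : ℝ) / 2) *
          Real.exp (-(Real.pi ^ 2 / δ) * ‖ξ‖ ^ 2) := by
          refine integral_mono_of_nonneg (Eventually.of_forall fun ξ => by positivity)
            ((integrable_gaussian hδ').const_mul _) (Eventually.of_forall fun ξ => ?_)
          refine mul_le_of_le_one_left (by positivity) ?_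
          rw [Real.exp_le_one_iff, neg_mul, neg_nonpos]
          positivity
      _ = (Real.pi / δ) ^ ((n : ℝ) / 2) * (Real.pi / (Real.pi ^ 2 / δ)) ^ ((n : ℝ) / 2) := by
          rw [integral_const_mul, hg]
      _ = 1 := by
          rw [← Real.mul_rpow (by positivity) (by positivity)]
          have : Real.pi / δ * (Real.pi / (Real.pi ^ 2 / δ)) = 1 := by
            have := Real.pi_pos.ne'
            field_simp
          rw [this, Real.one_rpow]
  have hF : ∀ x : Rn n, Tendsto (fun k : ℕ =>
      ENNReal.ofReal (gKer n α t x * Real.exp (-(1 / ((k : ℝ) + 1)) * ‖x‖ ^ 2))) atTop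
      (𝓝 (ENNReal.ofReal (gKer n α t x))) := by
    intro x
    refine ENNReal.tendsto_ofReal ?_
    have h := ((tendsto_one_div_add_atTop_nhds_zero_nat (𝕜 := ℝ)).neg.mul_const
        (‖x‖ ^ 2)).rexp.const_mul (gKer n α t x)
    simpa using h
  calc ∫⁻ x, ENNReal.ofReal (gKer n α t x)
      = ∫⁻ x, liminf (fun k : ℕ => ENNReal.ofReal (gKer n α t x *
          Real.exp (-(1 / ((k : ℝ) + 1)) * ‖x‖ ^ 2))) atTop := by
        simp_rw [fun x => (hF x).liminf_eq]
    _ ≤ liminf (fun k : ℕ => ∫⁻ x, ENNReal.ofReal (gKer n α t x *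
          Real.exp (-(1 / ((k : ℝ) + 1)) * ‖x‖ ^ 2))) atTop :=
        lintegral_liminf_le fun k => by fun_prop
    _ ≤ 1 := liminf_le_of_frequently_le'
        (Eventually.frequently (Eventually.of_forall fun k => hbound _ (by positivity)))

theorem integrable_gKer {n : ℕ} (hn : 1 ≤ n) {α t : ℝ} (hα : 0 < α ∧ α ≤ 1) (ht : 0 < t) :
    Integrable (gKer n α t) := by
  refine ⟨(measurable_gKer n α).of_uncurry_left.aestronglyMeasurable, ?_⟩
  rw [hasFiniteIntegral_iff_ofReal (Eventually.of_forall fun x => gKer_nonneg hn hα ht x)]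
  exact (lintegral_gKer_le_one hn hα ht).trans_lt ENNReal.one_lt_top

theorem gKer_le {n : ℕ} (hn : 1 ≤ n) {α : ℝ} (hα : 0 < α) :
    ∃ C > 0, ∀ t > 0, ∀ x : Rn n, gKer n α t x ≤ C * t ^ (-((n : ℝ) / (2 * α))) := by
  refine ⟨(∫ ξ : Rn n, Real.exp (-1 * ‖ξ‖ ^ (2 * α))) + 1, ?_, fun t ht x => ?_⟩
  · have : 0 ≤ ∫ ξ : Rn n, Real.exp (-1 * ‖ξ‖ ^ (2 * α)) :=
      integral_nonneg fun ξ => (Real.exp_pos _).le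
    linarith
  have hi := integrable_heatSymbol (n := n) hn hα ht
  rw [gKer_eq hn hα ht]
  have h1 : ∫ ξ : Rn n, Real.exp (-t * ‖ξ‖ ^ (2 * α)) * Real.cos (2 * Real.pi * ⟪ξ, x⟫)
      ≤ ∫ ξ : Rn n, Real.exp (-t * ‖ξ‖ ^ (2 * α)) := by
    refine integral_mono ?_ hi fun ξ => ?_
    · refine hi.mono' (Measurable.aestronglyMeasurable (by fun_prop))
        (Eventually.of_forall fun ξ => ?_)
      rw [norm_mul, Real.norm_eq_abs, Real.norm_eq_abs, Real.abs_exp]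
      exact mul_le_of_le_one_right (Real.exp_pos _).le (Real.abs_cos_le_one _)
    · exact mul_le_of_le_one_right (Real.exp_pos _).le (Real.cos_le_one _)
  have h2 := Measure.integral_comp_smul (volume : Measure (Rn n))
    (fun ξ : Rn n => Real.exp (-1 * ‖ξ‖ ^ (2 * α))) (t ^ (1 / (2 * α)))
  have hr : 0 < t ^ (1 / (2 * α)) := by positivity
  have e1 : ∀ ξ : Rn n, -1 * ‖t ^ (1 / (2 * α)) • ξ‖ ^ (2 * α) = -t * ‖ξ‖ ^ (2 * α) := by
    intro ξ
    rw [norm_smul, Real.norm_eq_abs, abs_of_pos hr, Real.mul_rpow hr.le (norm_nonneg _),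
      ← Real.rpow_mul ht.le, one_div_mul_cancel (by positivity), Real.rpow_one]
    ring
  have e2 : |((t ^ (1 / (2 * α))) ^ Module.finrank ℝ (Rn n))⁻¹| = t ^ (-((n : ℝ) / (2 * α))) := by
    rw [finrank_euclideanSpace_fin, abs_of_pos (by positivity), ← Real.rpow_natCast,
      ← Real.rpow_mul ht.le, ← Real.rpow_neg ht.le]
    ring_nf
  simp only [e1, e2, smul_eq_mul] at h2
  rw [h2] at h1
  refine h1.trans ?_
  rw [mul_comm]
  gcongr
  linarith

/-- Chapman–Kolmogorov identity for the fractional heat kernel. -/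
theorem gKer_semigroup {n : ℕ} (hn : 1 ≤ n) {α s t : ℝ} (hα : 0 < α ∧ α ≤ 1) (hs : 0 < s)
    (ht : 0 < t) (x z : Rn n) :
    ∫⁻ y, ENNReal.ofReal (gKer n α s (x - y)) * ENNReal.ofReal (gKer n α t (y - z))
      = ENNReal.ofReal (gKer n α (s + t) (x - z)) := by
  set F : ℝ → Rn n → ℂ := fun r ξ => (Real.exp (-r * ‖ξ‖ ^ (2 * α)) : ℂ) with hF
  have hFc : ∀ r, Continuous (F r) := fun r => Complex.continuous_ofReal.comp
    (Real.continuous_exp.comp (continuous_const.mul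
      (continuous_norm.rpow_const fun _ => Or.inr (by linarith))))
  have hFi : ∀ r, 0 < r → Integrable (F r) := fun r hr => (integrable_heatSymbol hn hα.1 hr).ofReal
  have hki := integrable_gKer hn hα hs
  have hFour : ∀ ξ, 𝓕 (fun y => (gKer n α s y : ℂ)) ξ = F s ξ := by
    intro ξ
    have hF' : 𝓕 (F s) = fun v => (gKer n α s (-v) : ℂ) := by
      ext v
      rw [← congrFun (fourierInv_eq_gKer hn hα.1 hs) (-v), Real.fourierInv_eq_fourier_neg, neg_neg]
    have h := (hFc s).fourier_fourierInv_eq (hFi s hs) (by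
      rw [hF']; exact hki.comp_neg.ofReal)
    rw [hF, fourierInv_eq_gKer hn hα.1 hs] at h
    rw [h]
  have hinv : ∀ r, 0 < r → ∀ y, (gKer n α r y : ℂ)
      = ∫ ξ, Complex.exp (((2 * Real.pi * ⟪ξ, y⟫ : ℝ) : ℂ) * Complex.I) * F r ξ := by
    intro r hr y
    rw [← congrFun (fourierInv_eq_gKer hn hα.1 hr) y, Real.fourierInv_eq']
    rfl
  have hinner : ∀ ξ, ∫ y, (gKer n α s (x - y) : ℂ) *
      Complex.exp (((2 * Real.pi * ⟪ξ, y - z⟫ : ℝ) : ℂ) * Complex.I)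
      = Complex.exp (((2 * Real.pi * ⟪ξ, x - z⟫ : ℝ) : ℂ) * Complex.I) * F s ξ := by
    intro ξ
    rw [← hFour ξ, Real.fourier_eq', ← integral_const_mul, ← integral_sub_left_eq_self _ volume x]
    congr 1
    ext w
    rw [smul_eq_mul, ← mul_assoc, ← Complex.exp_add, mul_comm, sub_sub_cancel]
    congr 2
    rw [show x - w - z = (x - z) - w by abel, inner_sub_right ξ, real_inner_comm w ξ]
    push_cast
    ring
  obtain ⟨C, hC, hk⟩ := gKer_le (n := n) hn hα.1
  have hmt : Measurable (gKer n α t) := (measurable_gKer n α).of_uncurry_left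
  have hms : Measurable (gKer n α s) := (measurable_gKer n α).of_uncurry_left
  have hInt : Integrable (fun y => gKer n α s (x - y) * gKer n α t (y - z)) := by
    refine ((hki.comp_sub_left x).mul_const (C * t ^ (-((n : ℝ) / (2 * α))))).mono'
      (Measurable.aestronglyMeasurable (by fun_prop)) (Eventually.of_forall fun y => ?_)
    rw [norm_mul, Real.norm_eq_abs, Real.norm_eq_abs, abs_of_nonneg (gKer_nonneg hn hα hs _),
      abs_of_nonneg (gKer_nonneg hn hα ht _)]
    exact mul_le_mul_of_nonneg_left (hk t ht _) (gKer_nonneg hn hα hs _)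
  have key : ∫ y, gKer n α s (x - y) * gKer n α t (y - z) = gKer n α (s + t) (x - z) := by
    rw [← Complex.ofReal_inj, ← integral_complex_ofReal, hinv (s + t) (by positivity)]
    have hswap : Integrable (Function.uncurry fun (y ξ : Rn n) => (gKer n α s (x - y) : ℂ) *
        (Complex.exp (((2 * Real.pi * ⟪ξ, y - z⟫ : ℝ) : ℂ) * Complex.I) * F t ξ))
        (volume.prod volume) := by
      have h := (hki.comp_sub_left x).mul_prod (integrable_heatSymbol (n := n) hn hα.1 ht)
      refine h.mono' (Measurable.aestronglyMeasurable ?_) (Eventually.of_forall fun w => ?_)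
      · unfold Function.uncurry
        have := (hFc t).measurable
        fun_prop
      · simp only [Function.uncurry, hF]
        rw [norm_mul, norm_mul, Complex.norm_exp_ofReal_mul_I, one_mul, Complex.norm_real,
          Complex.norm_real, Real.norm_eq_abs, Real.norm_eq_abs, Real.abs_exp,
          abs_of_nonneg (gKer_nonneg hn hα hs _)]
    calc ∫ y, ((gKer n α s (x - y) * gKer n α t (y - z) : ℝ) : ℂ)
        = ∫ y, ∫ ξ, (gKer n α s (x - y) : ℂ) *
        (Complex.exp (((2 * Real.pi * ⟪ξ, y - z⟫ : ℝ) : ℂ) * Complex.I) * F t ξ) := by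
          simp_rw [integral_const_mul, ← hinv t ht, Complex.ofReal_mul]
      _ = ∫ ξ, ∫ y, (gKer n α s (x - y) : ℂ) *
        (Complex.exp (((2 * Real.pi * ⟪ξ, y - z⟫ : ℝ) : ℂ) * Complex.I) * F t ξ) :=
          integral_integral_swap hswap
      _ = _ := by
          simp_rw [← mul_assoc, integral_mul_const, hinner]
          congr 1
          ext ξ
          rw [mul_assoc, hF]
          simp only
          rw [← Complex.ofReal_mul, ← Real.exp_add]
          ring_nf
  rw [← key, ofReal_integral_eq_lintegral_ofReal hInt
    (Eventually.of_forall fun y => mul_nonneg (gKer_nonneg hn hα hs _) (gKer_nonneg hn hα ht _))]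
  congr 1
  ext y
  rw [ENNReal.ofReal_mul (gKer_nonneg hn hα hs _)]

/-- Resolvent identities: `ρ = σ k + k • (r k) ρ = σ k + k • κ (σ k)`, and `κ ρ ≤ ρ`. -/
structure ResolventPair {Z Y : Type*} [MeasurableSpace Z] [MeasurableSpace Y] (κ : Kernel Z Z)
    (r : ℕ → Kernel Z Z) (ρ : Kernel Z Y) (σ : ℕ → Kernel Z Y) : Prop where
  left : ∀ k z, ρ z = σ k z + (k : ℝ≥0∞) • (ρ ∘ₖ r k) z
  right : ∀ k z, ρ z = σ k z + (k : ℝ≥0∞) • (σ k ∘ₖ κ) z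
  comp_le : ∀ z, (ρ ∘ₖ κ) z ≤ ρ z

namespace ResolventPair

variable {Z Y : Type*} [MeasurableSpace Z] [MeasurableSpace Y] {κ : Kernel Z Z}
  {r : ℕ → Kernel Z Z} {ρ : Kernel Z Y} {σ : ℕ → Kernel Z Y} {μ : Measure Z}

theorem lintegral_right (H : ResolventPair κ r ρ σ) (k : ℕ) (z : Z) {g : Y → ℝ≥0∞}
    (hg : Measurable g) :
    ∫⁻ y, g y ∂ρ z = ∫⁻ y, g y ∂σ k z + k * ∫⁻ x, ∫⁻ y, g y ∂σ k x ∂κ z := by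
  conv_lhs => rw [H.right k z]
  rw [lintegral_add_measure, lintegral_smul_measure, Kernel.lintegral_comp _ _ _ hg, smul_eq_mul]

theorem lintegral_comp_le (H : ResolventPair κ r ρ σ) (z : Z) {g : Y → ℝ≥0∞}
    (hg : Measurable g) : ∫⁻ x, ∫⁻ y, g y ∂ρ x ∂κ z ≤ ∫⁻ y, g y ∂ρ z := by
  rw [← Kernel.lintegral_comp _ _ _ hg]
  exact lintegral_mono' (H.comp_le z) le_rfl

theorem le (H : ResolventPair κ r ρ σ) (k : ℕ) (z : Z) : σ k z ≤ ρ z := by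
  conv_rhs => rw [H.left k z]
  exact Measure.le_add_right le_rfl

/-- The resolvent identity for Bochner integrals. -/
theorem integral_left (H : ResolventPair κ r ρ σ) {k : ℕ} (hk : k ≠ 0) {z : Z} {g : Y → ℝ}
    (hg : Integrable g (ρ z)) :
    Integrable (fun x => ∫ y, g y ∂ρ x) (r k z) ∧
    ∫ y, g y ∂ρ z = ∫ y, g y ∂σ k z + k * ∫ x, ∫ y, g y ∂ρ x ∂r k z := by
  have hk' : (k : ℝ≥0∞) ≠ 0 := by exact_mod_cast hk
  have h2 : Integrable g ((k : ℝ≥0∞) • (ρ ∘ₖ r k) z) := by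
    refine hg.mono_measure ?_
    conv_rhs => rw [H.left k z]
    exact Measure.le_add_left le_rfl
  have h3 : Integrable g ((ρ ∘ₖ r k) z) :=
    (integrable_smul_measure hk' (ENNReal.natCast_ne_top k)).1 h2
  refine ⟨h3.integral_comp, ?_⟩
  conv_lhs => rw [H.left k z]
  rw [integral_add_measure (hg.mono_measure (H.le k z)) h2, integral_smul_measure,
    Kernel.integral_comp h3]
  simp

/-- Comparison: a subsolution of the resolvent equation is dominated by the potential. -/
theorem le_lintegral (Hκ : ResolventPair κ r κ r) (H : ResolventPair κ r ρ σ)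
    (hac : ∀ z, κ z ≪ μ) {k : ℕ} (hk : k ≠ 0) {W : Z → ℝ≥0∞} (hW : Measurable W)
    {E : Y → ℝ≥0∞} (hE : Measurable E)
    (hle : ∀ᵐ z ∂μ, W z ≤ ∫⁻ y, E y ∂σ k z + k * ∫⁻ x, W x ∂r k z)
    (hfin : ∀ᵐ z ∂μ, ∫⁻ x, W x ∂κ z < ∞) : ∀ᵐ z ∂μ, W z ≤ ∫⁻ y, E y ∂ρ z := by
  have hk' : (k : ℝ≥0∞) ≠ 0 := by exact_mod_cast hk
  filter_upwards [hle, hfin] with z h1 h2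
  have h3 : ∫⁻ x, W x ∂κ z ≤ ∫⁻ x, ∫⁻ y, E y ∂σ k x ∂κ z + k * ∫⁻ x, ∫⁻ y, W y ∂r k x ∂κ z := by
    rw [← lintegral_const_mul _ hW.lintegral_kernel, ← lintegral_add_left hE.lintegral_kernel]
    exact lintegral_mono_ae ((hac z).ae_le hle)
  rw [Hκ.lintegral_right k z hW] at h3
  have h4 : (k : ℝ≥0∞) * ∫⁻ x, ∫⁻ y, W y ∂r k x ∂κ z ≠ ∞ := by
    refine ne_top_of_le_ne_top h2.ne ?_
    rw [Hκ.lintegral_right k z hW]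
    exact le_add_self
  have h5 := (ENNReal.add_le_add_iff_right h4).1 h3
  rw [H.lintegral_right k z hE]
  refine h1.trans ?_
  gcongr

theorem enorm_le_of_le_mul (Hκ : ResolventPair κ r κ r) (H : ResolventPair κ r ρ σ)
    (hac : ∀ z, κ z ≪ μ) {k : ℕ} (hk : k ≠ 0) {w h : Z → ℝ} (hw : Measurable w)
    (hh : Measurable h) {e : Y → ℝ} (he : Measurable e)
    (hhi : ∀ᵐ z ∂μ, Integrable h (κ z)) (hei : ∀ᵐ z ∂μ, Integrable e (ρ z))
    (heq : ∀ᵐ z ∂μ, w z + ∫ x, h x ∂κ z = ∫ y, e y ∂ρ z)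
    (hsign : ∀ z, 0 ≤ h z * w z) (hle : ∀ z, |h z| ≤ k * |w z|) :
    ∀ᵐ z ∂μ, ‖w z‖ₑ ≤ ∫⁻ y, ‖e y‖ₑ ∂ρ z := by
  have hracr : ∀ z, r k z ≪ μ := fun z =>
    (Measure.absolutelyContinuous_of_le (Hκ.le k z)).trans (hac z)
  refine le_lintegral Hκ H hac hk hw.enorm he.enorm ?_ ?_
  · filter_upwards [hhi, hei, heq] with z h1 h2 h3
    obtain ⟨i1, e1⟩ := Hκ.integral_left hk h1
    obtain ⟨i2, e2⟩ := H.integral_left hk h2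
    have hww : (fun x => ∫ y, e y ∂ρ x - ∫ y, h y ∂κ x) =ᵐ[r k z] w := by
      filter_upwards [(hracr z).ae_le heq] with x hx
      linarith
    have iw : Integrable w (r k z) := (i2.sub i1).congr hww
    have ih : Integrable h (r k z) := h1.mono_measure (Hκ.le k z)
    have e3 : w z = ∫ y, e y ∂σ k z + ∫ x, (k * w x - h x) ∂r k z := by
      rw [integral_sub (iw.const_mul _) ih, integral_const_mul, ← integral_congr_ae hww,
        integral_sub i2 i1]
      rw [e1, e2] at h3
      linarith
    rw [e3]
    refine (enorm_add_le _ _).trans (add_le_add (enorm_integral_le_lintegral_enorm _) ?_)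
    refine (enorm_integral_le_lintegral_enorm _).trans ?_
    rw [← lintegral_const_mul _ hw.enorm]
    refine lintegral_mono fun x => ?_
    have hx : |k * w x - h x| ≤ k * |w x| := by
      have a := hsign x
      have b := hle x
      rcases le_total 0 (w x) with hp | hp
      · rw [abs_of_nonneg hp] at b ⊢
        rcases eq_or_lt_of_le hp with h0 | h0
        · rw [← h0] at b ⊢
          simpa using b
        · have := nonneg_of_mul_nonneg_left a h0
          rw [abs_of_nonneg this] at b
          rw [abs_of_nonneg] <;> linarith
      · rw [abs_of_nonpos hp] at b ⊢
        rcases eq_or_lt_of_le hp with h0 | h0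
        · rw [h0] at b ⊢
          simpa using b
        · have := nonpos_of_mul_nonneg_left a h0
          rw [abs_of_nonpos this] at b
          rw [abs_of_nonpos] <;> linarith
    calc ‖k * w x - h x‖ₑ = ENNReal.ofReal |k * w x - h x| := Real.enorm_eq_ofReal_abs _
      _ ≤ ENNReal.ofReal (k * |w x|) := ENNReal.ofReal_le_ofReal hx
      _ = k * ‖w x‖ₑ := by
        rw [ENNReal.ofReal_mul (by positivity), ENNReal.ofReal_natCast, Real.enorm_eq_ofReal_abs]
  · filter_upwards [hhi, hei] with z h1 h2
    have a : ∫⁻ x, ‖w x‖ₑ ∂κ z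
        ≤ ∫⁻ x, (∫⁻ y, ‖e y‖ₑ ∂ρ x + ∫⁻ y, ‖h y‖ₑ ∂κ x) ∂κ z := by
      refine lintegral_mono_ae ?_
      filter_upwards [(hac z).ae_le heq] with x hx
      rw [show w x = ∫ y, e y ∂ρ x - ∫ y, h y ∂κ x by linarith]
      exact (enorm_sub_le).trans (add_le_add (enorm_integral_le_lintegral_enorm _)
        (enorm_integral_le_lintegral_enorm _))
    refine a.trans_lt ?_
    rw [lintegral_add_left he.enorm.lintegral_kernel]
    exact ENNReal.add_lt_top.2 ⟨(H.lintegral_comp_le z he.enorm).trans_lt h2.2,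
      (Hκ.lintegral_comp_le z hh.enorm).trans_lt h1.2⟩

/-- Stability for monotone perturbations of a resolvent. -/
theorem enorm_le (Hκ : ResolventPair κ r κ r)
    (hac : ∀ z, κ z ≪ μ) {w h e : Z → ℝ} (hw : Measurable w)
    (hh : Measurable h) (he : Measurable e)
    (hhi : ∀ᵐ z ∂μ, Integrable h (κ z)) (hei : ∀ᵐ z ∂μ, Integrable e (κ z))
    (heq : ∀ᵐ z ∂μ, w z + ∫ x, h x ∂κ z = ∫ y, e y ∂κ z)
    (hsign : ∀ z, 0 ≤ h z * w z) (h0 : ∀ z, w z = 0 → h z = 0) :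
    ∀ᵐ z ∂μ, ‖w z‖ₑ ≤ ∫⁻ y, ‖e y‖ₑ ∂κ z := by
  set c : ℕ → Z → ℝ := fun k z => max (-(k * |w z|)) (min (h z) (k * |w z|)) with hc
  have hcm : ∀ k, Measurable (c k) := fun k => by fun_prop
  have hcle : ∀ k z, |c k z| ≤ |h z| := fun k z => by
    have : 0 ≤ k * |w z| := by positivity
    rw [abs_le]
    rcases abs_cases (h z) with ⟨a1, a2⟩ | ⟨a1, a2⟩ <;>
    · rw [a1]
      constructor
      · exact (le_min (by linarith) (by linarith)).trans (le_max_right _ _)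
      · exact max_le (by linarith) ((min_le_left _ _).trans (by linarith))
  have hck : ∀ k z, |c k z| ≤ k * |w z| := fun k z => by
    have : 0 ≤ k * |w z| := by positivity
    rw [abs_le]
    exact ⟨le_max_left _ _, max_le (by linarith) (min_le_right _ _)⟩
  have hcs : ∀ k z, 0 ≤ c k z * w z := fun k z => by
    have hk : 0 ≤ k * |w z| := by positivity
    rcases lt_trichotomy (w z) 0 with hp | hp | hp
    · have := nonpos_of_mul_nonneg_left (hsign z) hp
      exact mul_nonneg_of_nonpos_of_nonpos (max_le (by linarith) ((min_le_left _ _).trans this)) hp.le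
    · rw [hp, mul_zero]
    · have := nonneg_of_mul_nonneg_left (hsign z) hp
      exact mul_nonneg ((le_min this hk).trans (le_max_right _ _)) hp.le
  have hci : ∀ k, ∀ᵐ z ∂μ, Integrable (c k) (κ z) := fun k => by
    filter_upwards [hhi] with z hz
    exact hz.mono (hcm k).aestronglyMeasurable (Eventually.of_forall fun x => hcle k x)
  have key : ∀ᵐ z ∂μ, ∀ k : ℕ, ‖w z‖ₑ ≤ ∫⁻ y, ‖e y + (c (k + 1) y - h y)‖ₑ ∂κ z := by
    rw [ae_all_iff]
    intro k
    refine enorm_le_of_le_mul Hκ Hκ hac (Nat.succ_ne_zero k) hw (hcm (k + 1))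
      (he.add ((hcm _).sub hh)) (hci _) ?_ ?_ (hcs _) (hck _)
    · filter_upwards [hei, hhi, hci (k + 1)] with z a1 a2 a3 using a1.add (a3.sub a2)
    · filter_upwards [heq, hei, hhi, hci (k + 1)] with z a0 a1 a2 a3
      have e1 := integral_add a1 (a3.sub a2)
      simp only [Pi.sub_apply] at e1
      rw [e1, integral_sub a3 a2]
      linarith
  filter_upwards [key, hhi] with z hz hi
  have hlim : Tendsto (fun k : ℕ => ∫⁻ y, ‖c (k + 1) y - h y‖ₑ ∂κ z) atTop (𝓝 (∫⁻ _, 0 ∂κ z)) := by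
    refine tendsto_lintegral_of_dominated_convergence (fun y => 2 * ‖h y‖ₑ)
      (fun k => ((hcm _).sub hh).enorm) (fun k => Eventually.of_forall fun y => ?_) ?_
      (Eventually.of_forall fun y => ?_)
    · simp only [two_mul]
      exact enorm_sub_le.trans (add_le_add (enorm_le_iff_norm_le.2 (hcle _ y)) le_rfl)
    · rw [lintegral_const_mul _ hh.enorm]
      exact ENNReal.mul_ne_top (by norm_num) hi.2.ne
    · refine tendsto_const_nhds.congr' ?_
      by_cases hy : w y = 0
      · refine Eventually.of_forall fun k => ?_
        simp [hc, hy, h0 y hy]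
      · have hy' : 0 < |w y| := abs_pos.2 hy
        obtain ⟨K, hK⟩ := exists_nat_ge (|h y| / |w y|)
        filter_upwards [eventually_ge_atTop K] with k hk
        have : |h y| ≤ (k + 1 : ℕ) * |w y| := by
          rw [div_le_iff₀ hy'] at hK
          refine hK.trans (mul_le_mul_of_nonneg_right ?_ hy'.le)
          exact_mod_cast hk.trans (Nat.le_succ k)
        obtain ⟨b1, b2⟩ := abs_le.1 this
        have : c (k + 1) y = h y := by
          simp only [hc]
          rw [min_eq_left b2, max_eq_right b1]
        rw [this, sub_self, enorm_zero]
  rw [lintegral_zero] at hlim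
  have h1 : ∀ k : ℕ, ‖w z‖ₑ ≤ ∫⁻ y, ‖e y‖ₑ ∂κ z + ∫⁻ y, ‖c (k + 1) y - h y‖ₑ ∂κ z := fun k => by
    refine (hz k).trans ?_
    rw [← lintegral_add_left he.enorm]
    exact lintegral_mono fun y => enorm_add_le _ _
  have := ge_of_tendsto' (tendsto_const_nhds.add hlim) h1
  rwa [add_zero] at this

end ResolventPair

theorem abs_pow_mul_self_monotone (b : ℕ) : Monotone fun c : ℝ => |c| ^ b * c := by
  intro x y hxy
  simp only
  rcases le_total 0 x with hx | hx
  · have := hx.trans hxy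
    rw [abs_of_nonneg hx, abs_of_nonneg this]
    gcongr
  · rcases le_total 0 y with hy | hy
    · exact (mul_nonpos_of_nonneg_of_nonpos (by positivity) hx).trans (by positivity)
    · rw [abs_of_nonpos hx, abs_of_nonpos hy]
      have : (-y) ^ b * (-y) ≤ (-x) ^ b * (-x) := by
        have := neg_nonneg.2 hy
        have := neg_nonneg.2 hx
        gcongr
      linarith

theorem abs_abs_pow_mul_self (b : ℕ) (c : ℝ) : |(|c| ^ b * c)| = |c| ^ (b + 1) := by
  rw [abs_mul, abs_pow, abs_abs, pow_succ]

theorem abs_abs_pow_mul_self_sub_le (b : ℕ) {m x y : ℝ} (hx : |x| ≤ m) (hy : |y| ≤ m) :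
    |(|x| ^ b * x) - |y| ^ b * y| ≤ (b + 1) * m ^ b * |x - y| := by
  have hm : 0 ≤ m := (abs_nonneg x).trans hx
  have hsame : ∀ {x y : ℝ}, |x| ≤ m → |y| ≤ m → 0 ≤ x → 0 ≤ y →
      |(|x| ^ b * x) - |y| ^ b * y| ≤ (b + 1) * m ^ b * |x - y| := by
    intro x y hx hy h0 h1
    have h := abs_pow_sub_pow_le x y (b + 1)
    rw [abs_of_nonneg h0, abs_of_nonneg h1, ← pow_succ, ← pow_succ] at *
    refine h.trans ?_
    rw [Nat.add_sub_cancel, mul_comm |x - y|, mul_right_comm]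
    push_cast
    gcongr
    exact max_le hx hy
  have hopp : ∀ {x y : ℝ}, |x| ≤ m → |y| ≤ m → 0 ≤ x → y ≤ 0 →
      |(|x| ^ b * x) - |y| ^ b * y| ≤ (b + 1) * m ^ b * |x - y| := by
    intro x y hx hy h0 h1
    refine (abs_sub _ _).trans ?_
    rw [abs_abs_pow_mul_self, abs_abs_pow_mul_self, pow_succ, pow_succ]
    have e : |x - y| = |x| + |y| := by
      rw [abs_of_nonneg h0, abs_of_nonpos h1, abs_of_nonneg (by linarith)]
      ring
    rw [e]
    calc |x| ^ b * |x| + |y| ^ b * |y| ≤ m ^ b * |x| + m ^ b * |y| := by gcongr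
      _ = 1 * m ^ b * (|x| + |y|) := by ring
      _ ≤ _ := by
        gcongr
        linarith [(Nat.cast_nonneg b : (0 : ℝ) ≤ b)]
  rcases le_total 0 x with h0 | h0 <;> rcases le_total 0 y with h1 | h1
  · exact hsame hx hy h0 h1
  · exact hopp hx hy h0 h1
  · rw [abs_sub_comm, abs_sub_comm x]
    exact hopp hy hx h1 h0
  · have := hsame (x := -x) (y := -y) (by rwa [abs_neg]) (by rwa [abs_neg]) (by linarith)
      (by linarith)
    rw [abs_neg, abs_neg] at this
    rwa [show |x| ^ b * -x - |y| ^ b * -y = -(|x| ^ b * x - |y| ^ b * y) by ring,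
      show -x - -y = -(x - y) by ring, abs_neg, abs_neg] at this

/-- Truncation of a real number to `[-m, m]`. -/
def clip (m c : ℝ) : ℝ := max (-m) (min c m)

theorem clip_monotone (m : ℝ) : Monotone (clip m) := fun x y h => by
  unfold clip
  gcongr

theorem measurable_clip (m : ℝ) : Measurable (clip m) := by
  unfold clip
  fun_prop

theorem abs_clip_le {m : ℝ} (hm : 0 ≤ m) (c : ℝ) : |clip m c| ≤ m :=
  abs_le.2 ⟨le_max_left _ _, max_le (by linarith) (min_le_right _ _)⟩

theorem clip_of_abs_le {m c : ℝ} (h : |c| ≤ m) : clip m c = c := by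
  obtain ⟨h1, h2⟩ := abs_le.1 h
  rw [clip, min_eq_left h2, max_eq_right h1]

theorem abs_clip_le_abs {m : ℝ} (hm : 0 ≤ m) (c : ℝ) : |clip m c| ≤ |c| := by
  rcases le_total |c| m with h | h
  · rw [clip_of_abs_le h]
  · exact (abs_clip_le hm c).trans h

theorem abs_clip_sub_clip_le (m x y : ℝ) : |clip m x - clip m y| ≤ |x - y| := by
  unfold clip
  rw [max_comm, max_comm (-m)]
  exact (abs_max_sub_max_le_abs _ _ _).trans (abs_min_sub_min_le_max _ _ _ _ |>.trans (by simp))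

/-- Global solvability of `u + κ(N(u)) = L` for bounded Lipschitz `N`. -/
theorem exists_lipschitz_solution {Z : Type*} [MeasurableSpace Z] {κ : Kernel Z Z}
    [IsFiniteKernel κ] (hmass : ∀ z, κ z univ ≤ 1)
    (hweight : ∀ c : ℕ, 0 < c → ∃ φ : Z → ℝ, (∀ z, 1 ≤ φ z) ∧
      ∀ z, Integrable φ (κ z) ∧ c * ∫ x, φ x ∂κ z ≤ φ z)
    {L : Z → ℝ} (hL : Measurable L) {N : ℝ → ℝ} (hN : Measurable N) {B : ℝ} (hB : ∀ x, |N x| ≤ B)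
    {K : ℕ} (hK : ∀ x y, |N x - N y| ≤ K * |x - y|) :
    ∃ u : Z → ℝ, Measurable u ∧ ∀ z, u z + ∫ x, N (u x) ∂κ z = L z := by
  have hB0 : 0 ≤ B := (abs_nonneg _).trans (hB 0)
  obtain ⟨φ, hφ1, hφ⟩ := hweight (2 * (K + 1)) (by positivity)
  set U : ℕ → Z → ℝ := fun j => Nat.rec L (fun _ v z => L z - ∫ x, N (v x) ∂κ z) j with hU
  have hU1 : ∀ j z, U (j + 1) z = L z - ∫ x, N (U j x) ∂κ z := fun j z => rfl
  have hUm : ∀ j, Measurable (U j) := by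
    intro j
    induction j with
    | zero => exact hL
    | succ j ih =>
      exact hL.sub ((hN.comp ih).stronglyMeasurable.integral_kernel).measurable
  have hNi : ∀ {v : Z → ℝ}, Measurable v → ∀ z, Integrable (fun x => N (v x)) (κ z) :=
    fun hv z => Integrable.of_bound (hN.comp hv).aestronglyMeasurable B
      (Eventually.of_forall fun x => hB _)
  have hd : ∀ j z, |U j z - U (j + 1) z| ≤ B * φ z * (1 / 2) ^ j := by
    intro j
    induction j with
    | zero =>
      intro z
      have e : U 0 z - U (0 + 1) z = ∫ x, N (U 0 x) ∂κ z := by rw [hU1]; simp [hU]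
      rw [e, pow_zero, mul_one]
      have h1 := norm_integral_le_of_norm_le_const (μ := κ z)
        (f := fun x => N (U 0 x)) (Eventually.of_forall fun x => hB (U 0 x))
      refine h1.trans (mul_le_mul_of_nonneg_left ?_ hB0)
      exact le_trans (ENNReal.toReal_le_of_le_ofReal zero_le_one (by simpa using hmass z)) (hφ1 z)
    | succ j ih =>
      intro z
      have e : U (j + 1) z - U (j + 1 + 1) z = ∫ x, (N (U (j + 1) x) - N (U j x)) ∂κ z := by
        rw [integral_sub (hNi (hUm (j + 1)) z) (hNi (hUm j) z), hU1 (j + 1),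
          hU1 j]
        ring
      rw [e]
      have h1 : ‖∫ x, (N (U (j + 1) x) - N (U j x)) ∂κ z‖
          ≤ ∫ x, K * (B * (1 / 2) ^ j) * φ x ∂κ z := by
        refine norm_integral_le_of_norm_le ((hφ z).1.const_mul _) (Eventually.of_forall fun x => ?_)
        refine (hK _ _).trans ?_
        rw [mul_assoc, abs_sub_comm]
        refine mul_le_mul_of_nonneg_left ((ih x).trans (le_of_eq (by ring))) (Nat.cast_nonneg K)
      refine h1.trans ?_
      rw [integral_const_mul]
      have h2 := (hφ z).2
      push_cast at h2
      have h3 : 0 ≤ ∫ x, φ x ∂κ z := integral_nonneg fun x => zero_le_one.trans (hφ1 x)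
      have h4 : (K : ℝ) * ∫ x, φ x ∂κ z ≤ φ z / 2 := by nlinarith
      calc K * (B * (1 / 2) ^ j) * ∫ x, φ x ∂κ z
          = (B * (1 / 2) ^ j) * (K * ∫ x, φ x ∂κ z) := by ring
        _ ≤ (B * (1 / 2) ^ j) * (φ z / 2) := by gcongr
        _ = _ := by ring
  have hc : ∀ z, ∃ l, Tendsto (fun j => U j z) atTop (𝓝 l) := fun z =>
    cauchySeq_tendsto_of_complete
      (cauchySeq_of_le_geometric (1 / 2) (B * φ z) (by norm_num) fun j => hd j z)
  choose u hu using hc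
  refine ⟨u, measurable_of_tendsto_metrizable hUm (tendsto_pi_nhds.2 hu), fun z => ?_⟩
  have hNc : Continuous N := by
    refine (LipschitzWith.of_dist_le_mul (K := (K : NNReal)) fun x y => ?_).continuous
    simpa [Real.dist_eq] using hK x y
  have h1 : Tendsto (fun j => ∫ x, N (U j x) ∂κ z) atTop (𝓝 (∫ x, N (u x) ∂κ z)) := by
    refine tendsto_integral_of_dominated_convergence (fun _ => B)
      (fun j => (hN.comp (hUm j)).aestronglyMeasurable) (integrable_const B)
      (fun j => Eventually.of_forall fun x => hB _) (Eventually.of_forall fun x => ?_)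
    exact (hNc.tendsto _).comp (hu x)
  have h2 := tendsto_nhds_unique ((hu z).comp (tendsto_add_atTop_nat 1))
    ((tendsto_const_nhds (x := L z)).sub h1)
  rw [h2]
  ring

namespace ResolventPair

variable {Z Y : Type*} [MeasurableSpace Z] [MeasurableSpace Y] {κ : Kernel Z Z}
  {r : ℕ → Kernel Z Z} {ρ : Kernel Z Y} {σ : ℕ → Kernel Z Y} {μ : Measure Z}

/-- Solvability of `u + κ(|u|^b u) = ρ(F)` under a domination assumption. -/
theorem exists_solution [IsFiniteKernel κ] (Hκ : ResolventPair κ r κ r)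
    (H : ResolventPair κ r ρ σ) (hac : ∀ z, κ z ≪ μ) (hmass : ∀ z, κ z univ ≤ 1)
    (hweight : ∀ c : ℕ, 0 < c → ∃ φ : Z → ℝ, (∀ z, 1 ≤ φ z) ∧
      ∀ z, Integrable φ (κ z) ∧ c * ∫ x, φ x ∂κ z ≤ φ z)
    (b : ℕ) {F : Y → ℝ} (hF : Measurable F) (hΛ : ∀ᵐ z ∂μ, ∫⁻ y, ‖F y‖ₑ ∂ρ z < ∞)
    (hΛb : ∀ᵐ z ∂μ, ∫⁻ x, (∫⁻ y, ‖F y‖ₑ ∂ρ x) ^ (b + 1) ∂κ z < ∞) :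
    ∃ u : Z → ℝ, Measurable u ∧ ∀ᵐ z ∂μ, ‖u z‖ₑ ≤ ∫⁻ y, ‖F y‖ₑ ∂ρ z ∧
      Integrable (fun x => |u x| ^ b * u x) (κ z) ∧
      u z + ∫ x, |u x| ^ b * u x ∂κ z = ∫ y, F y ∂ρ z := by
  set Λ : Z → ℝ≥0∞ := fun z => ∫⁻ y, ‖F y‖ₑ ∂ρ z with hΛdef
  have hΛm : Measurable Λ := hF.enorm.lintegral_kernel
  set N : ℕ → ℝ → ℝ := fun m c => |clip m c| ^ b * clip m c with hN
  have hNm : ∀ m, Measurable (N m) := fun m => by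
    have := measurable_clip m
    fun_prop
  have hNmono : ∀ m, Monotone (N m) := fun m =>
    (abs_pow_mul_self_monotone b).comp (clip_monotone m)
  have hNB : ∀ (m : ℕ) x, |N m x| ≤ (m : ℝ) ^ (b + 1) := fun m x => by
    rw [hN]
    simp only
    rw [abs_abs_pow_mul_self]
    exact pow_le_pow_left₀ (abs_nonneg _) (abs_clip_le (Nat.cast_nonneg m) x) _
  have hNle : ∀ (m : ℕ) x, |N m x| ≤ |x| ^ (b + 1) := fun m x => by
    rw [hN]
    simp only
    rw [abs_abs_pow_mul_self]
    exact pow_le_pow_left₀ (abs_nonneg _) (abs_clip_le_abs (Nat.cast_nonneg m) x) _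
  have hNeq : ∀ (m : ℕ) (x : ℝ), |x| ≤ m → N m x = |x| ^ b * x := fun m x hx => by
    rw [hN]
    simp only
    rw [clip_of_abs_le hx]
  have hN0 : ∀ m, N m 0 = 0 := fun m => by
    rw [hNeq m 0 (by simp), mul_zero]
  have hNL : ∀ (m : ℕ) x y, |N m x - N m y| ≤ ((b + 1) * m ^ b + 1 : ℕ) * |x - y| := by
    intro m x y
    refine (abs_abs_pow_mul_self_sub_le b (abs_clip_le (Nat.cast_nonneg m) x)
      (abs_clip_le (Nat.cast_nonneg m) y)).trans ?_
    have h := abs_clip_sub_clip_le m x y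
    push_cast
    refine mul_le_mul ?_ h (abs_nonneg _) (by positivity)
    linarith
  have hLm : Measurable fun z => ∫ y, F y ∂ρ z :=
    hF.stronglyMeasurable.integral_kernel.measurable
  choose v hvm hv using fun m : ℕ =>
    exists_lipschitz_solution hmass hweight hLm (hNm m) (hNB m) (hNL m)
  have hFi : ∀ᵐ z ∂μ, Integrable F (ρ z) := by
    filter_upwards [hΛ] with z hz using ⟨hF.aestronglyMeasurable, hz⟩
  have hNi : ∀ m m' z, Integrable (fun x => N m (v m' x)) (κ z) := fun m m' z =>
    Integrable.of_bound ((hNm m).comp (hvm m')).aestronglyMeasurable _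
      (Eventually.of_forall fun x => hNB m _)
  have hdom : ∀ᵐ z ∂μ, ∀ m, ‖v m z‖ₑ ≤ Λ z := by
    rw [ae_all_iff]
    intro m
    refine enorm_le_of_le_mul Hκ H hac (Nat.succ_ne_zero ((b + 1) * m ^ b)) (hvm m) ((hNm m).comp (hvm m)) hF
      (Eventually.of_forall fun z => hNi m m z) hFi (Eventually.of_forall fun z => hv m z)
      (fun z => ?_) (fun z => ?_)
    · rcases le_total 0 (v m z) with h | h
      · exact mul_nonneg ((hN0 m).symm.le.trans (hNmono m h)) h
      · exact mul_nonneg_of_nonpos_of_nonpos ((hNmono m h).trans (hN0 m).le) h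
    · simpa [hN0] using hNL m (v m z) 0
  have hdiff : ∀ᵐ z ∂μ, ∀ m m', m ≤ m' → ‖v m' z - v m z‖ₑ
      ≤ ∫⁻ x, {x | (m : ℝ≥0∞) < Λ x}.indicator (fun x => 2 * Λ x ^ (b + 1)) x ∂κ z := by
    rw [ae_all_iff]
    intro m
    rw [ae_all_iff]
    intro m'
    by_cases hmm : m ≤ m'
    swap
    · exact Eventually.of_forall fun z h => absurd h hmm
    have h1 := enorm_le (μ := μ) Hκ hac (w := fun z => v m' z - v m z)
      (h := fun z => N m' (v m' z) - N m' (v m z)) (e := fun z => N m (v m z) - N m' (v m z))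
      ((hvm m').sub (hvm m)) (((hNm m').comp (hvm m')).sub ((hNm m').comp (hvm m)))
      (((hNm m).comp (hvm m)).sub ((hNm m').comp (hvm m)))
      (Eventually.of_forall fun z => (hNi _ _ z).sub (hNi _ _ z))
      (Eventually.of_forall fun z => (hNi _ _ z).sub (hNi _ _ z))
      (Eventually.of_forall fun z => ?_) (fun z => ?_) (fun z hz => ?_)
    · filter_upwards [h1] with z hz _
      refine hz.trans (lintegral_mono_ae ?_)
      filter_upwards [(hac z).ae_le hdom] with x hx
      by_cases hxm : (m : ℝ≥0∞) < Λ x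
      · rw [indicator_of_mem (by exact hxm), two_mul]
        refine enorm_sub_le.trans (add_le_add ?_ ?_) <;>
        · refine le_trans ?_ (pow_le_pow_left' (hx m) (b + 1))
          rw [← enorm_pow, enorm_le_iff_norm_le, norm_pow]
          exact hNle _ _
      · rw [indicator_of_notMem (by exact hxm)]
        have h2 : |v m x| ≤ m := by
          have h3 := (hx m).trans (not_lt.1 hxm)
          rw [Real.enorm_eq_ofReal_abs] at h3
          simpa using (ENNReal.ofReal_le_iff_le_toReal (ENNReal.natCast_ne_top m)).1 h3
        rw [hNeq m _ h2, hNeq m' _ (h2.trans (by exact_mod_cast hmm)), sub_self, enorm_zero]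
    · have e1 := hv m z
      have e2 := hv m' z
      rw [integral_sub (hNi _ _ z) (hNi _ _ z), integral_sub (hNi _ _ z) (hNi _ _ z)]
      linarith
    · rcases le_total (v m' z) (v m z) with h | h
      · exact mul_nonneg_of_nonpos_of_nonpos (sub_nonpos.2 (hNmono m' h)) (sub_nonpos.2 h)
      · exact mul_nonneg (sub_nonneg.2 (hNmono m' h)) (sub_nonneg.2 h)
    · rw [sub_eq_zero.1 hz, sub_self]
  have hsmall : ∀ᵐ z ∂μ, Tendsto (fun m : ℕ => ∫⁻ x,
      {x | (m : ℝ≥0∞) < Λ x}.indicator (fun x => 2 * Λ x ^ (b + 1)) x ∂κ z) atTop (𝓝 0) := by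
    filter_upwards [hΛb] with z hz
    rw [← lintegral_zero (μ := κ z)]
    have hgm : Measurable fun x => 2 * Λ x ^ (b + 1) := (hΛm.pow_const _).const_mul _
    refine tendsto_lintegral_of_dominated_convergence (fun x => 2 * Λ x ^ (b + 1))
      (fun m => hgm.indicator (measurableSet_lt measurable_const hΛm))
      (fun m => Eventually.of_forall fun x => indicator_le_self' (fun _ _ => zero_le) x) ?_ ?_
    · rw [lintegral_const_mul _ (hΛm.pow_const _)]
      exact ENNReal.mul_ne_top (by norm_num) hz.ne
    · filter_upwards [(hac z).ae_le hΛ] with x hx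
      refine tendsto_const_nhds.congr' ?_
      obtain ⟨k, hk⟩ := ENNReal.exists_nat_gt hx.ne
      filter_upwards [eventually_ge_atTop k] with m hm
      rw [indicator_of_notMem]
      simp only [mem_ofPred_eq, not_lt]
      exact hk.le.trans (by exact_mod_cast hm)
  have hlim : ∀ᵐ z ∂μ, ∃ l, Tendsto (fun m => v m z) atTop (𝓝 l) := by
    filter_upwards [hdiff, hsmall] with z h1 h2
    refine cauchySeq_tendsto_of_complete (EMetric.cauchySeq_iff_NNReal.2 fun ε hε => ?_)
    obtain ⟨k, hk⟩ := (h2.eventually_lt_const (ENNReal.coe_pos.2 hε)).exists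
    refine ⟨k, fun m hm => ?_⟩
    rw [edist_eq_enorm_sub]
    exact (h1 k m hm).trans_lt hk
  obtain ⟨u, hum, hu⟩ := measurable_limit_of_tendsto_metrizable_ae
    (fun m => (hvm m).aemeasurable) hlim
  have hule : ∀ᵐ z ∂μ, ‖u z‖ₑ ≤ Λ z := by
    filter_upwards [hdom, hu] with z h1 h2
    exact le_of_tendsto' ((continuous_enorm.tendsto _).comp h2) h1
  have hNum : Measurable fun x => |u x| ^ b * u x := by fun_prop
  refine ⟨u, hum, ?_⟩
  filter_upwards [hule, hu, hΛb] with z h1 h2 h3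
  have hbd : Integrable (fun x => (Λ x ^ (b + 1)).toReal) (κ z) :=
    integrable_toReal_of_lintegral_ne_top (hΛm.pow_const _).aemeasurable h3.ne
  have hle : ∀ {y : ℝ} {x : Z}, ‖y‖ₑ ≤ Λ x → Λ x < ∞ → |y| ^ (b + 1) ≤ (Λ x ^ (b + 1)).toReal := by
    intro y x hy hx
    rw [ENNReal.toReal_pow]
    refine pow_le_pow_left₀ (abs_nonneg _) ?_ _
    rw [Real.enorm_eq_ofReal_abs] at hy
    exact (ENNReal.ofReal_le_iff_le_toReal hx.ne).1 hy
  refine ⟨h1, hbd.mono' hNum.aestronglyMeasurable ?_, ?_⟩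
  · filter_upwards [(hac z).ae_le hule, (hac z).ae_le hΛ] with x hx hx'
    rw [Real.norm_eq_abs, abs_abs_pow_mul_self]
    exact hle hx hx'
  · have h4 : Tendsto (fun m => ∫ x, N m (v m x) ∂κ z) atTop (𝓝 (∫ x, |u x| ^ b * u x ∂κ z)) := by
      refine tendsto_integral_of_dominated_convergence _
        (fun m => ((hNm m).comp (hvm m)).aestronglyMeasurable) hbd (fun m => ?_) ?_
      · filter_upwards [(hac z).ae_le hdom, (hac z).ae_le hΛ] with x hx hx'
        exact (hNle m _).trans (hle (hx m) hx')
      · filter_upwards [(hac z).ae_le hu, (hac z).ae_le hdom, (hac z).ae_le hΛ] with x hx hxd hx'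
        have hc : Continuous fun c : ℝ => |c| ^ b * c := by fun_prop
        refine ((hc.tendsto _).comp hx).congr' ?_
        obtain ⟨k, hk⟩ := ENNReal.exists_nat_gt hx'.ne
        filter_upwards [eventually_ge_atTop k] with m hm
        refine (hNeq m _ ?_).symm
        have h5 := (hxd m).trans (hk.le.trans (show (k : ℝ≥0∞) ≤ m by exact_mod_cast hm))
        rw [Real.enorm_eq_ofReal_abs] at h5
        simpa using (ENNReal.ofReal_le_iff_le_toReal (ENNReal.natCast_ne_top m)).1 h5
    exact tendsto_nhds_unique (h2.add h4)
      ((tendsto_const_nhds (x := ∫ y, F y ∂ρ z)).congr fun m => (hv m z).symm)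

/-- Uniqueness for `u + κ(|u|^b u) = L`. -/
theorem eq_of_solution (Hκ : ResolventPair κ r κ r) (hac : ∀ z, κ z ≪ μ) (b : ℕ) {L u v : Z → ℝ}
    (hu : Measurable u) (hv : Measurable v)
    (hui : ∀ᵐ z ∂μ, Integrable (fun x => |u x| ^ b * u x) (κ z) ∧
      u z + ∫ x, |u x| ^ b * u x ∂κ z = L z)
    (hvi : ∀ᵐ z ∂μ, Integrable (fun x => |v x| ^ b * v x) (κ z) ∧
      v z + ∫ x, |v x| ^ b * v x ∂κ z = L z) : ∀ᵐ z ∂μ, v z = u z := by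
  have h := enorm_le (μ := μ) Hκ hac (w := fun z => v z - u z)
    (h := fun z => |v z| ^ b * v z - |u z| ^ b * u z) (e := fun _ => 0) (by fun_prop)
    (by fun_prop) measurable_const
    (by filter_upwards [hui, hvi] with z h1 h2 using h2.1.sub h1.1)
    (Eventually.of_forall fun z => integrable_zero _ _ _)
    (by
      filter_upwards [hui, hvi] with z h1 h2
      rw [integral_sub h2.1 h1.1, integral_zero]
      linarith [h1.2, h2.2])
    (fun z => by
      have hm := abs_pow_mul_self_monotone b
      rcases le_total (v z) (u z) with h | h
      · exact mul_nonneg_of_nonpos_of_nonpos (sub_nonpos.2 (hm h)) (sub_nonpos.2 h)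
      · exact mul_nonneg (sub_nonneg.2 (hm h)) (sub_nonneg.2 h))
    (fun z hz => by
      rw [sub_eq_zero.1 hz, sub_self])
  filter_upwards [h] with z hz
  simpa [sub_eq_zero] using hz

end ResolventPair

/-- The space-time density of the damped heat potential `e^{-k(t-s)} 𝔤_{t-s}(x-y)`, `s < t ≤ 1`. -/
def heatDens (n : ℕ) (α : ℝ) (k : ℕ) (z w : ℝ × Rn n) : ℝ≥0∞ :=
  if w.1 < z.1 ∧ z.1 ≤ 1 then
    ENNReal.ofReal (Real.exp (-k * (z.1 - w.1))) *
      ENNReal.ofReal (gKer n α (z.1 - w.1) (z.2 - w.2))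
  else 0

theorem measurable_heatDens (n : ℕ) (α : ℝ) (k : ℕ) :
    Measurable (Function.uncurry (heatDens n α k)) := by
  unfold Function.uncurry heatDens
  refine Measurable.ite ?_ ?_ measurable_const
  · have h1 : MeasurableSet {p : (ℝ × Rn n) × (ℝ × Rn n) | p.2.1 < p.1.1} :=
      measurableSet_lt (by fun_prop) (by fun_prop)
    have h2 : MeasurableSet {p : (ℝ × Rn n) × (ℝ × Rn n) | p.1.1 ≤ 1} :=
      measurableSet_le (by fun_prop) (by fun_prop)
    exact h1.inter h2
  · refine Measurable.mul (by fun_prop) (Measurable.ennreal_ofReal ?_)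
    exact (measurable_gKer n α).comp (f := fun p : (ℝ × Rn n) × (ℝ × Rn n) =>
      (p.1.1 - p.2.1, p.1.2 - p.2.2)) (by fun_prop)

/-- Damped heat potentials with respect to a time measure `τ`. -/
def heatPot (n : ℕ) (α : ℝ) (τ : Measure ℝ) [SFinite τ] (k : ℕ) : Kernel (ℝ × Rn n) (ℝ × Rn n) :=
  Kernel.withDensity (Kernel.const _ (τ.prod volume)) (heatDens n α k)

theorem heatPot_apply (n : ℕ) (α : ℝ) (τ : Measure ℝ) [SFinite τ] (k : ℕ) (z : ℝ × Rn n) :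
    heatPot n α τ k z = (τ.prod volume).withDensity (heatDens n α k z) := by
  rw [heatPot, Kernel.withDensity_apply _ (measurable_heatDens n α k), Kernel.const_apply]

theorem lintegral_heatPot (n : ℕ) (α : ℝ) (τ : Measure ℝ) [SFinite τ] (k : ℕ) (z : ℝ × Rn n)
    {g : ℝ × Rn n → ℝ≥0∞} (hg : Measurable g) :
    ∫⁻ w, g w ∂heatPot n α τ k z = ∫⁻ w, heatDens n α k z w * g w ∂τ.prod volume := by
  rw [heatPot_apply, lintegral_withDensity_eq_lintegral_mul _
    (measurable_heatDens n α k).of_uncurry_left hg]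
  rfl

/-- The unit time interval measure. -/
abbrev unitTime : Measure ℝ := volume.restrict (Ioc 0 1)

theorem lintegral_heatDens_mul {n : ℕ} (hn : 1 ≤ n) {α : ℝ} (hα : 0 < α ∧ α ≤ 1) (j k : ℕ)
    (z y : ℝ × Rn n) (hy : 0 ≤ y.1) :
    ∫⁻ x, heatDens n α j z x * heatDens n α k x y ∂unitTime.prod volume
      = (∫⁻ s in Ioo y.1 z.1,
        ENNReal.ofReal (Real.exp (-j * (z.1 - s))) * ENNReal.ofReal (Real.exp (-k * (s - y.1))))
        * heatDens n α 0 z y := by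
  have hm : Measurable fun x => heatDens n α j z x * heatDens n α k x y :=
    (measurable_heatDens n α j).of_uncurry_left.mul (measurable_heatDens n α k).of_uncurry_right
  rw [lintegral_prod _ hm.aemeasurable]
  by_cases hz : y.1 < z.1 ∧ z.1 ≤ 1
  swap
  · have h0 : ∀ x : ℝ × Rn n, heatDens n α j z x * heatDens n α k x y = 0 := by
      intro x
      by_cases h1 : x.1 < z.1 ∧ z.1 ≤ 1
      · by_cases h2 : y.1 < x.1 ∧ x.1 ≤ 1
        · exact absurd ⟨h2.1.trans h1.1, h1.2⟩ hz
        · rw [heatDens, heatDens, if_neg h2, mul_zero]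
      · rw [heatDens, if_neg h1, zero_mul]
    simp only [h0, lintegral_zero]
    rw [heatDens, if_neg hz, mul_zero]
  · have hin : ∀ s, ∫⁻ x, heatDens n α j z (s, x) * heatDens n α k (s, x) y
        = (Ioo y.1 z.1).indicator (fun s => ENNReal.ofReal (Real.exp (-j * (z.1 - s))) *
          ENNReal.ofReal (Real.exp (-k * (s - y.1))) * heatDens n α 0 z y) s := by
      intro s
      by_cases hs : s ∈ Ioo y.1 z.1
      · rw [indicator_of_mem hs]
        simp only [heatDens, if_pos hz, if_pos (And.intro hs.2 hz.2),
          if_pos (And.intro hs.1 (hs.2.le.trans hz.2))]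
        have hsg := gKer_semigroup hn hα (sub_pos.2 hs.2) (sub_pos.2 hs.1) z.2 y.2
        rw [show z.1 - s + (s - y.1) = z.1 - y.1 by ring] at hsg
        rw [← hsg]
        have hmg : ∀ r (c : Rn n), Measurable fun x : Rn n =>
            ENNReal.ofReal (gKer n α r (c - x)) := fun r c =>
          ((measurable_gKer n α).of_uncurry_left.comp (measurable_const.sub measurable_id)).ennreal_ofReal
        have hmg' : ∀ r (c : Rn n), Measurable fun x : Rn n =>
            ENNReal.ofReal (gKer n α r (x - c)) := fun r c =>
          ((measurable_gKer n α).of_uncurry_left.comp (measurable_id.sub measurable_const)).ennreal_ofReal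
        rw [show Real.exp (-((0 : ℕ) : ℝ) * (z.1 - y.1)) = 1 by simp, ENNReal.ofReal_one, one_mul,
          ← lintegral_const_mul _ ((hmg _ _).fun_mul (hmg' _ _))]
        refine lintegral_congr fun x => ?_
        ring
      · rw [indicator_of_notMem hs]
        have h0 : ∀ x : Rn n, heatDens n α j z (s, x) * heatDens n α k (s, x) y = 0 := by
          intro x
          by_cases h1 : s < z.1
          · have h2 : ¬ (y.1 < s) := fun h => hs ⟨h, h1⟩
            simp [heatDens, h2]
          · simp [heatDens, h1]
        simp only [h0, lintegral_zero]
    simp only [hin]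
    have hsub : Ioo y.1 z.1 ⊆ Ioc 0 1 := fun s hs => ⟨hy.trans_lt hs.1, hs.2.le.trans hz.2⟩
    rw [lintegral_indicator measurableSet_Ioo, Measure.restrict_restrict measurableSet_Ioo,
      inter_eq_left.2 hsub,
      lintegral_mul_const _ (by fun_prop)]

theorem lintegral_Ioo_deriv {F F' : ℝ → ℝ} (hF : ∀ s, HasDerivAt F (F' s) s) (hc : Continuous F')
    (h0 : ∀ s, 0 ≤ F' s) {a t : ℝ} (hat : a ≤ t) :
    ∫⁻ s in Ioo a t, ENNReal.ofReal (F' s) = ENNReal.ofReal (F t - F a) := by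
  rw [← intervalIntegral.integral_eq_sub_of_hasDerivAt (fun s _ => hF s)
    (hc.intervalIntegrable _ _), intervalIntegral.integral_of_le hat, restrict_Ioo_eq_restrict_Ioc,
    ofReal_integral_eq_lintegral_ofReal hc.integrableOn_Ioc (Eventually.of_forall h0)]

theorem mul_lintegral_exp_left (k : ℕ) {a t : ℝ} (hat : a ≤ t) :
    (k : ℝ≥0∞) * ∫⁻ s in Ioo a t, ENNReal.ofReal (Real.exp (-k * (t - s)))
      = ENNReal.ofReal (1 - Real.exp (-k * (t - a))) := by
  rw [← lintegral_const_mul _ (by fun_prop), ← ENNReal.ofReal_natCast]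
  simp only [← ENNReal.ofReal_mul (Nat.cast_nonneg k : (0 : ℝ) ≤ k)]
  rw [lintegral_Ioo_deriv (F := fun s => Real.exp (-k * (t - s))) (fun s => ?_) (by fun_prop)
    (fun s => by positivity) hat]
  · simp
  · convert! ((((hasDerivAt_id s).const_sub t).const_mul (-(k : ℝ))).exp) using 1
    simp only [id]
    ring

theorem mul_lintegral_exp_right (k : ℕ) {a t : ℝ} (hat : a ≤ t) :
    (k : ℝ≥0∞) * ∫⁻ s in Ioo a t, ENNReal.ofReal (Real.exp (-k * (s - a)))
      = ENNReal.ofReal (1 - Real.exp (-k * (t - a))) := by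
  rw [← lintegral_const_mul _ (by fun_prop), ← ENNReal.ofReal_natCast]
  simp only [← ENNReal.ofReal_mul (Nat.cast_nonneg k : (0 : ℝ) ≤ k)]
  rw [lintegral_Ioo_deriv (F := fun s => -Real.exp (-k * (s - a))) (fun s => ?_) (by fun_prop)
    (fun s => by positivity) hat]
  · congr 1
    simp
    ring
  · convert! ((((hasDerivAt_id s).sub_const a).const_mul (-(k : ℝ))).exp).neg using 1
    simp only [id]
    ring

theorem heatDens_zero_eq {n : ℕ} {α : ℝ} (k : ℕ) (z y : ℝ × Rn n) :
    heatDens n α k z y + ENNReal.ofReal (1 - Real.exp (-k * (z.1 - y.1))) * heatDens n α 0 z y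
      = heatDens n α 0 z y := by
  by_cases h : y.1 < z.1 ∧ z.1 ≤ 1
  · simp only [heatDens, if_pos h]
    rw [show Real.exp (-((0 : ℕ) : ℝ) * (z.1 - y.1)) = 1 by simp, ENNReal.ofReal_one, one_mul,
      ← add_mul, ← ENNReal.ofReal_add (Real.exp_pos _).le]
    · simp
    · rw [sub_nonneg, Real.exp_le_one_iff]
      have := mul_nonneg (Nat.cast_nonneg k : (0 : ℝ) ≤ k) (sub_nonneg.2 h.1.le)
      linarith
  · simp only [heatDens, if_neg h, mul_zero, add_zero]

theorem lintegral_heatPot_comp (n : ℕ) (α : ℝ) (τ τ' : Measure ℝ) [SFinite τ] [SFinite τ']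
    (j k : ℕ) (z : ℝ × Rn n) {g : ℝ × Rn n → ℝ≥0∞} (hg : Measurable g) :
    ∫⁻ w, g w ∂(heatPot n α τ k ∘ₖ heatPot n α τ' j) z
      = ∫⁻ y, (∫⁻ x, heatDens n α j z x * heatDens n α k x y ∂τ'.prod volume) * g y
        ∂τ.prod volume := by
  have hk := measurable_heatDens n α k
  have hj : Measurable (heatDens n α j z) := (measurable_heatDens n α j).of_uncurry_left
  rw [Kernel.lintegral_comp _ _ _ hg, lintegral_heatPot _ _ _ _ _ hg.lintegral_kernel]
  simp only [lintegral_heatPot n α τ k _ hg]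
  have e : ∀ x, heatDens n α j z x * ∫⁻ y, heatDens n α k x y * g y ∂τ.prod volume
      = ∫⁻ y, heatDens n α j z x * heatDens n α k x y * g y ∂τ.prod volume := by
    intro x
    rw [← lintegral_const_mul _ (hk.of_uncurry_left.fun_mul hg)]
    simp only [mul_assoc]
  simp only [e]
  rw [lintegral_lintegral_swap]
  · refine lintegral_congr fun y => ?_
    rw [lintegral_mul_const _ (hj.fun_mul hk.of_uncurry_right)]
  · unfold Function.uncurry
    refine Measurable.aemeasurable ?_
    exact ((hj.comp measurable_fst).mul hk).mul (hg.comp measurable_snd)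

theorem resolventPair_heatPot {n : ℕ} (hn : 1 ≤ n) {α : ℝ} (hα : 0 < α ∧ α ≤ 1) (τ : Measure ℝ)
    [SFinite τ] (hτ : ∀ᵐ s ∂τ, 0 ≤ s) :
    ResolventPair (heatPot n α unitTime 0) (heatPot n α unitTime) (heatPot n α τ 0)
      (heatPot n α τ) := by
  have hτ' : ∀ᵐ y ∂τ.prod (volume : Measure (Rn n)), 0 ≤ y.1 := Measure.quasiMeasurePreserving_fst.ae hτ
  have hdm : ∀ k z, Measurable (heatDens n α k z) := fun k z =>
    (measurable_heatDens n α k).of_uncurry_left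
  have hid : ∀ j k l : ℕ, ∀ z, (∀ y : ℝ × Rn n, 0 ≤ y.1 →
      (l : ℝ≥0∞) * ∫⁻ x, heatDens n α j z x * heatDens n α k x y ∂unitTime.prod volume
        = ENNReal.ofReal (1 - Real.exp (-l * (z.1 - y.1))) * heatDens n α 0 z y) →
      heatPot n α τ 0 z = heatPot n α τ l z
        + (l : ℝ≥0∞) • (heatPot n α τ k ∘ₖ heatPot n α unitTime j) z := by
    intro j k l z h
    refine Measure.ext_of_lintegral _ fun g hg => ?_
    rw [lintegral_add_measure, lintegral_smul_measure, lintegral_heatPot_comp _ _ _ _ _ _ _ hg,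
      lintegral_heatPot _ _ _ _ _ hg, lintegral_heatPot _ _ _ _ _ hg, smul_eq_mul,
      ← lintegral_const_mul' _ _ (ENNReal.natCast_ne_top l), ← lintegral_add_left ((hdm l z).fun_mul hg)]
    refine lintegral_congr_ae ?_
    filter_upwards [hτ'] with y hy
    rw [← mul_assoc, h y hy, ← add_mul, heatDens_zero_eq]
  have hdz : ∀ z y : ℝ × Rn n, ¬ y.1 ≤ z.1 → heatDens n α 0 z y = 0 := fun z y h => by
    rw [heatDens, if_neg]
    exact fun h' => h h'.1.le
  refine ⟨fun k z => hid k 0 k z fun y hy => ?_, fun k z => hid 0 k k z fun y hy => ?_,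
    fun z => ?_⟩
  · rw [lintegral_heatDens_mul hn hα _ _ _ _ hy, ← mul_assoc]
    by_cases hyz : y.1 ≤ z.1
    · rw [← mul_lintegral_exp_left k hyz]
      simp
    · rw [hdz z y hyz, mul_zero, mul_zero]
  · rw [lintegral_heatDens_mul hn hα _ _ _ _ hy, ← mul_assoc]
    by_cases hyz : y.1 ≤ z.1
    · rw [← mul_lintegral_exp_right k hyz]
      simp
    · rw [hdz z y hyz, mul_zero, mul_zero]
  · refine Measure.le_iff.2 fun s hs => ?_
    rw [← lintegral_indicator_one hs, ← lintegral_indicator_one hs]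
    have hg : Measurable (s.indicator (1 : ℝ × Rn n → ℝ≥0∞)) := measurable_one.indicator hs
    rw [lintegral_heatPot_comp _ _ _ _ _ _ _ hg, lintegral_heatPot _ _ _ _ _ hg]
    refine lintegral_mono_ae ?_
    filter_upwards [hτ'] with y hy
    refine mul_le_mul_left ?_ _
    rw [lintegral_heatDens_mul hn hα _ _ _ _ hy]
    by_cases hyz : y.1 < z.1 ∧ z.1 ≤ 1
    · refine mul_le_of_le_one_left zero_le ?_
      simp only [Nat.cast_zero, neg_zero, zero_mul, Real.exp_zero, ENNReal.ofReal_one, mul_one,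
        lintegral_one, Measure.restrict_apply MeasurableSet.univ, univ_inter, Real.volume_Ioo]
      rw [ENNReal.ofReal_le_one]
      linarith
    · rw [show heatDens n α 0 z y = 0 by rw [heatDens, if_neg hyz], mul_zero]

theorem lintegral_heatPot_time_le {n : ℕ} (hn : 1 ≤ n) {α : ℝ} (hα : 0 < α ∧ α ≤ 1)
    {ψ : ℝ → ℝ≥0∞} (hψ : Measurable ψ) (z : ℝ × Rn n) :
    ∫⁻ w, ψ w.1 ∂heatPot n α unitTime 0 z ≤ ∫⁻ s in Ioc 0 1, (Iio z.1).indicator ψ s := by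
  rw [lintegral_heatPot _ _ _ _ _ (by fun_prop), lintegral_prod _
    ((measurable_heatDens n α 0).of_uncurry_left.fun_mul (by fun_prop)).aemeasurable]
  refine lintegral_mono fun s => ?_
  have hms : Measurable fun y : Rn n => heatDens n α 0 z (s, y) :=
    (measurable_heatDens n α 0).of_uncurry_left.comp measurable_prodMk_left
  simp only
  rw [lintegral_mul_const _ hms]
  by_cases hs : s < z.1
  · rw [indicator_of_mem (by exact hs)]
    refine mul_le_of_le_one_left zero_le ?_
    have h := lintegral_gKer_le_one hn hα (sub_pos.2 hs)
    rw [← lintegral_sub_left_eq_self _ z.2] at h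
    refine le_trans (lintegral_mono fun x => ?_) h
    unfold heatDens
    split_ifs
    · simp
    · exact zero_le
  · have : ∀ x, heatDens n α 0 z (s, x) = 0 := fun x => by
      rw [heatDens, if_neg]
      exact fun h => hs h.1
    simp [this]

theorem heatPot_mass_le {n : ℕ} (hn : 1 ≤ n) {α : ℝ} (hα : 0 < α ∧ α ≤ 1) (z : ℝ × Rn n) :
    heatPot n α unitTime 0 z univ ≤ 1 := by
  rw [← lintegral_one]
  refine (lintegral_heatPot_time_le hn hα (ψ := 1) measurable_const z).trans ?_
  refine (lintegral_mono (indicator_le_self _ _)).trans ?_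
  simp

theorem heatPot_weight {n : ℕ} (hn : 1 ≤ n) {α : ℝ} (hα : 0 < α ∧ α ≤ 1) (c : ℕ) :
    ∃ φ : ℝ × Rn n → ℝ, (∀ z, 1 ≤ φ z) ∧
      ∀ z, Integrable φ (heatPot n α unitTime 0 z) ∧
        c * ∫ x, φ x ∂heatPot n α unitTime 0 z ≤ φ z := by
  rcases Nat.eq_zero_or_pos c with rfl | hc
  · have : ∀ z, IsFiniteMeasure (heatPot n α unitTime 0 z) := fun z =>
      ⟨(heatPot_mass_le hn hα z).trans_lt ENNReal.one_lt_top⟩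
    exact ⟨fun _ => 1, fun z => le_rfl, fun z => ⟨integrable_const _, by simp⟩⟩
  have hφm : Measurable fun z : ℝ × Rn n => Real.exp (c * max z.1 0) := by fun_prop
  have key : ∀ z : ℝ × Rn n, (c : ℝ≥0∞) *
      ∫⁻ w, ENNReal.ofReal (Real.exp (c * max w.1 0)) ∂heatPot n α unitTime 0 z
      ≤ ENNReal.ofReal (Real.exp (c * max z.1 0)) := by
    intro z
    have h1 := lintegral_heatPot_time_le hn hα
      (ψ := fun s => ENNReal.ofReal (Real.exp (c * max s 0))) (by fun_prop) z
    have h2 : ∫⁻ s in Ioc 0 1, (Iio z.1).indicator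
        (fun s => ENNReal.ofReal (Real.exp (c * max s 0))) s
        ≤ ∫⁻ s in Ioo 0 (max z.1 0), ENNReal.ofReal (Real.exp (c * s)) := by
      rw [← lintegral_indicator measurableSet_Ioc, ← lintegral_indicator measurableSet_Ioo]
      refine lintegral_mono fun s => ?_
      by_cases h : s ∈ Ioc (0 : ℝ) 1 ∧ s ∈ Iio z.1
      · rw [indicator_of_mem h.1, indicator_of_mem h.2, indicator_of_mem, max_eq_left h.1.1.le]
        exact ⟨h.1.1, lt_max_of_lt_left h.2⟩
      · by_cases h' : s ∈ Ioc (0 : ℝ) 1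
        · rw [indicator_of_mem h', indicator_of_notMem fun h'' => h ⟨h', h''⟩]
          exact zero_le
        · rw [indicator_of_notMem h']
          exact zero_le
    refine (mul_le_mul_right (h1.trans h2) _).trans ?_
    rw [← lintegral_const_mul _ (by fun_prop), ← ENNReal.ofReal_natCast]
    simp only [← ENNReal.ofReal_mul (Nat.cast_nonneg c : (0 : ℝ) ≤ c)]
    rw [lintegral_Ioo_deriv (F := fun s => Real.exp (c * s)) (fun s => ?_) (by fun_prop)
      (fun s => by positivity) (le_max_right _ _)]
    · refine ENNReal.ofReal_le_ofReal ?_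
      simp
    · convert! ((hasDerivAt_id s).const_mul (c : ℝ)).exp using 1
      simp only [id]
      ring
  refine ⟨fun z => Real.exp (c * max z.1 0), fun z => Real.one_le_exp (by positivity), fun z => ?_⟩
  have hfin : ∫⁻ w, ENNReal.ofReal (Real.exp (c * max w.1 0)) ∂heatPot n α unitTime 0 z ≠ ∞ := by
    intro h
    have h1 := key z
    rw [h, ENNReal.mul_top (by exact_mod_cast hc.ne')] at h1
    exact ENNReal.ofReal_ne_top (top_le_iff.1 h1)
  refine ⟨⟨hφm.aestronglyMeasurable, ?_⟩, ?_⟩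
  · rw [hasFiniteIntegral_iff_ofReal (Eventually.of_forall fun _ => (Real.exp_pos _).le)]
    exact hfin.lt_top
  · rw [integral_eq_lintegral_of_nonneg_ae (Eventually.of_forall fun _ => (Real.exp_pos _).le)
      hφm.aestronglyMeasurable]
    have h1 := ENNReal.toReal_mono ENNReal.ofReal_ne_top (key z)
    rwa [ENNReal.toReal_mul, ENNReal.toReal_natCast, ENNReal.toReal_ofReal (Real.exp_pos _).le] at h1

theorem heatPot_absolutelyContinuous (n : ℕ) (α : ℝ) (τ : Measure ℝ) [SFinite τ] (k : ℕ)
    (z : ℝ × Rn n) : heatPot n α τ k z ≪ τ.prod volume := by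
  rw [heatPot_apply]
  exact withDensity_absolutelyContinuous _ _

theorem IsPembq.exists_log_bound {n : ℕ} (hn : 1 ≤ n) {q : ℝ} (hq : 1 < q) {qb : Rn n → ℝ}
    (hqb : IsPembq n q qb) : ∃ K : ℝ, 0 ≤ K ∧ ∀ᵐ x ∂(volume : Measure (Rn n)),
      q ≤ qb x ∧ (qb x - q) * Real.log (Real.exp 1 + ‖x‖) ≤ K := by
  obtain ⟨⟨-, h1, C₁, -, C₂, hC₂, pinf, -, hdec⟩, hess, ⟨M, hM⟩, hlim⟩ := hqb
  have : Nonempty (Fin n) := ⟨⟨0, hn⟩⟩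
  have hq0 : 0 < q := by linarith
  have hinv : Tendsto (fun x => 1 / q - 1 / qb x) (cocompact (Rn n)) (𝓝 0) := by
    refine hlim.inv_tendsto_atTop.congr fun x => ?_
    have : qb x ≠ 0 := by linarith [h1 x (mem_univ x)]
    simp only [Pi.inv_apply, inv_div]
    field_simp
  have hlog : Tendsto (fun x : Rn n => C₂ / Real.log (Real.exp 1 + ‖x‖)) (cocompact (Rn n))
      (𝓝 0) :=
    tendsto_const_nhds.div_atTop (Real.tendsto_log_atTop.comp
      (tendsto_const_nhds.add_atTop (tendsto_norm_cocompact_atTop)))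
  have hdiff : Tendsto (fun x => 1 / qb x - 1 / pinf) (cocompact (Rn n)) (𝓝 0) :=
    squeeze_zero_norm (fun x => hdec x (mem_univ x)) hlog
  have hsum : Tendsto (fun _ : Rn n => 1 / q - 1 / pinf) (cocompact (Rn n)) (𝓝 0) := by
    simpa using hinv.add hdiff
  have hpinf : 1 / pinf = 1 / q := by
    have := tendsto_nhds_unique tendsto_const_nhds hsum
    linarith
  have hbd : IsBoundedUnder (· ≥ ·) (ae (volume : Measure (Rn n))) qb :=
    isBoundedUnder_of ⟨1, fun x => h1 x (mem_univ x)⟩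
  refine ⟨q * max M 0 * C₂, by positivity, ?_⟩
  filter_upwards [ae_essInf_le hbd, hM] with x hx hxM
  have hqx : q ≤ qb x := hess.trans hx
  refine ⟨hqx, ?_⟩
  have hqx0 : 0 < qb x := by linarith
  have hl : 0 < Real.log (Real.exp 1 + ‖x‖) :=
    Real.log_pos (by linarith [Real.add_one_lt_exp one_ne_zero, norm_nonneg x])
  have h := hdec x (mem_univ x)
  rw [hpinf, le_div_iff₀ hl, abs_sub_comm, show 1 / q - 1 / qb x = (qb x - q) / (q * qb x) by
    field_simp, abs_of_nonneg (div_nonneg (by linarith) (by positivity)), div_mul_eq_mul_div,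
    div_le_iff₀ (by positivity)] at h
  refine h.trans ?_
  have : qb x ≤ max M 0 := hxM.trans (le_max_left _ _)
  calc C₂ * (q * qb x) ≤ C₂ * (q * max M 0) := by gcongr
    _ = _ := by ring

theorem ENNReal.rpow_le_mul_rpow_add {q r : ℝ} (hq : 0 < q) (hr : q ≤ r) {K H : ℝ≥0∞}
    (hKH : 1 ≤ K * H ^ (r - q)) (a : ℝ≥0∞) : a ^ q ≤ K * a ^ r + H ^ q := by
  rcases le_total H a with h | h
  · refine le_add_right ?_
    calc a ^ q ≤ K * H ^ (r - q) * a ^ q := le_mul_of_one_le_left zero_le hKH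
      _ ≤ K * a ^ (r - q) * a ^ q := by
        gcongr
      _ = K * a ^ r := by
        rw [mul_assoc, ← ENNReal.rpow_add_of_nonneg _ _ (by linarith) hq.le]
        congr 2
        ring
  · exact le_add_left (ENNReal.rpow_le_rpow h hq.le)

theorem IsPembq.exists_lintegral_le {n : ℕ} (hn : 1 ≤ n) {q : ℝ} (hq : 1 < q) {qb : Rn n → ℝ}
    (hqb : IsPembq n q qb) : ∃ C : ℝ≥0∞, C ≠ ∞ ∧ ∀ g : Rn n → ℝ≥0∞,
      ∫⁻ x, g x ^ qb x ≤ 1 → ∫⁻ x, g x ^ q ≤ C := by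
  obtain ⟨K, hK, hbd⟩ := hqb.exists_log_bound hn hq
  have hfin := finite_integral_one_add_norm (E := Rn n) (μ := volume) (r := (n + 1) * q) (by
    rw [finrank_euclideanSpace_fin]
    nlinarith [(Nat.cast_nonneg n : (0 : ℝ) ≤ n)])
  refine ⟨ENNReal.ofReal (Real.exp ((n + 1) * K))
    + ∫⁻ x : Rn n, ENNReal.ofReal ((1 + ‖x‖) ^ (-((n + 1) * q))),
    ENNReal.add_ne_top.2 ⟨ENNReal.ofReal_ne_top, hfin.ne⟩, fun g hg => ?_⟩
  have hpt : ∀ᵐ x : Rn n, g x ^ q ≤ ENNReal.ofReal (Real.exp ((n + 1) * K)) * g x ^ qb x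
      + ENNReal.ofReal ((1 + ‖x‖) ^ (-((n + 1) * q))) := by
    filter_upwards [hbd] with x ⟨hx, hxK⟩
    have hpos : 0 < 1 + ‖x‖ := by positivity
    have hrw : ENNReal.ofReal ((1 + ‖x‖) ^ (-((n + 1) * q)))
        = ENNReal.ofReal ((1 + ‖x‖) ^ (-((n : ℝ) + 1))) ^ q := by
      rw [ENNReal.ofReal_rpow_of_nonneg (by positivity) (by linarith), ← Real.rpow_mul hpos.le]
      congr 2
      ring
    rw [hrw]
    refine ENNReal.rpow_le_mul_rpow_add (by linarith) hx ?_ _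
    rw [ENNReal.ofReal_rpow_of_nonneg (by positivity) (by linarith), ← Real.rpow_mul hpos.le,
      ← ENNReal.ofReal_mul (Real.exp_pos _).le, ENNReal.one_le_ofReal, Real.rpow_def_of_pos hpos,
      ← Real.exp_add]
    refine Real.one_le_exp ?_
    have hlog : Real.log (1 + ‖x‖) ≤ Real.log (Real.exp 1 + ‖x‖) :=
      Real.log_le_log hpos (by linarith [Real.add_one_lt_exp one_ne_zero])
    have := (mul_le_mul_of_nonneg_left hlog (sub_nonneg.2 hx)).trans hxK
    nlinarith [(Nat.cast_nonneg n : (0 : ℝ) ≤ n)]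
  refine (lintegral_mono_ae hpt).trans ?_
  rw [lintegral_add_right _ (by fun_prop), lintegral_const_mul' _ _ ENNReal.ofReal_ne_top]
  gcongr
  exact mul_le_of_le_one_right zero_le hg

theorem IsPembq.exists_le_luxNorm {n : ℕ} (hn : 1 ≤ n) {q : ℝ} (hq : 1 < q) {qb : Rn n → ℝ}
    (hqb : IsPembq n q qb) : ∃ C : ℝ≥0∞, C ≠ ∞ ∧ ∀ g : Rn n → ℝ≥0∞,
      (∫⁻ x, g x ^ q) ^ (1 / q) ≤ C * luxNorm volume qb g := by
  have hq0 : 0 < q := by linarith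
  obtain ⟨C, hC, hg⟩ := hqb.exists_lintegral_le hn hq
  have hC1 : max C 1 ^ (1 / q) ≠ ∞ :=
    ENNReal.rpow_ne_top_of_nonneg (by positivity) (max_lt hC.lt_top ENNReal.one_lt_top).ne
  have hC0 : max C 1 ^ (1 / q) ≠ 0 := by
    rw [← pos_iff_ne_zero]
    exact zero_lt_one.trans_le (ENNReal.one_le_rpow (le_max_right _ _) (by positivity))
  refine ⟨max C 1 ^ (1 / q), hC1, fun g => ?_⟩
  rw [mul_comm, ← ENNReal.div_le_iff hC0 hC1, luxNorm]
  refine le_sInf fun lam ⟨hl, hlam⟩ => ?_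
  rw [ENNReal.div_le_iff hC0 hC1]
  rcases eq_or_ne lam ∞ with rfl | hlt
  · rw [ENNReal.top_mul hC0]
    exact le_top
  have h := (hg _ hlam).trans (le_max_left C 1)
  simp only [div_eq_mul_inv, ENNReal.mul_rpow_of_nonneg _ _ hq0.le] at h
  rw [lintegral_mul_const' _ _ (ENNReal.rpow_ne_top_of_nonneg hq0.le (ENNReal.inv_ne_top.2 hl.ne')),
    ENNReal.inv_rpow, ← div_eq_mul_inv, ENNReal.div_le_iff
      (ENNReal.rpow_pos hl hlt).ne' (ENNReal.rpow_ne_top_of_nonneg hq0.le hlt)] at h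
  calc (∫⁻ x, g x ^ q) ^ (1 / q) ≤ (max C 1 * lam ^ q) ^ (1 / q) := by gcongr
    _ = lam * max C 1 ^ (1 / q) := by
      rw [ENNReal.mul_rpow_of_nonneg _ _ (by positivity), ← ENNReal.rpow_mul,
        mul_one_div_cancel hq0.ne', ENNReal.rpow_one, mul_comm]

theorem lintegral_mul_rpow_le {X : Type*} [MeasurableSpace X] {μ : Measure X} {r : ℝ} (hr : 1 ≤ r)
    {w g : X → ℝ≥0∞} (hw : Measurable w) (hg : Measurable g) :
    (∫⁻ x, w x * g x ∂μ) ^ r ≤ (∫⁻ x, w x ∂μ) ^ (r - 1) * ∫⁻ x, w x * g x ^ r ∂μ := by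
  have h1 : ∫⁻ x, w x * g x ∂μ = ∫⁻ x, g x ∂μ.withDensity w :=
    (lintegral_withDensity_eq_lintegral_mul _ hw hg).symm
  have h2 : ∫⁻ x, w x * g x ^ r ∂μ = ∫⁻ x, g x ^ r ∂μ.withDensity w :=
    (lintegral_withDensity_eq_lintegral_mul _ hw (hg.pow_const r)).symm
  have h3 : ∫⁻ x, w x ∂μ = μ.withDensity w univ := by simp
  rw [h1, h2, h3]
  generalize μ.withDensity w = ν
  rcases hr.eq_or_lt with rfl | hr
  · simp
  have hr0 : 0 < r := by linarith
  have h := ENNReal.lintegral_mul_le_Lp_mul_Lq ν (Real.HolderConjugate.conjExponent hr)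
    hg.aemeasurable (g := 1) aemeasurable_const
  simp only [Pi.mul_apply, Pi.one_apply, mul_one, ENNReal.one_rpow, lintegral_one] at h
  calc (∫⁻ x, g x ∂ν) ^ r
      ≤ ((∫⁻ x, g x ^ r ∂ν) ^ (1 / r) * ν univ ^ (1 / r.conjExponent)) ^ r := by gcongr
    _ = ν univ ^ (r - 1) * ∫⁻ x, g x ^ r ∂ν := by
      rw [ENNReal.mul_rpow_of_nonneg _ _ hr0.le, ← ENNReal.rpow_mul, ← ENNReal.rpow_mul,
        one_div_mul_cancel hr0.ne', ENNReal.rpow_one, mul_comm]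
      congr 2
      rw [Real.conjExponent]
      field_simp

theorem lintegral_conv_rpow_le {G : Type*} [NormedAddCommGroup G] [MeasurableSpace G] [BorelSpace G]
    [SecondCountableTopology G] {μ : Measure G} [SFinite μ] [μ.IsAddLeftInvariant]
    [μ.IsNegInvariant] {k φ : G → ℝ≥0∞} (hk : Measurable k) (hφ : Measurable φ)
    (hk1 : ∫⁻ x, k x ∂μ ≤ 1) {D : ℝ≥0∞} (hD : ∀ x, k x ≤ D) {q r : ℝ} (hq : 1 ≤ q) (hr : q ≤ r) :
    ∫⁻ x, (∫⁻ y, k (x - y) * φ y ∂μ) ^ r ∂μ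
      ≤ D ^ ((r - q) / q) * ((∫⁻ y, φ y ^ q ∂μ) ^ (1 / q)) ^ r := by
  have hq0 : 0 < q := by linarith
  have hks : ∀ x, Measurable fun y => k (x - y) := fun x => hk.comp (measurable_const.sub measurable_id)
  have h1 : ∀ x, (∫⁻ y, k (x - y) * φ y ∂μ) ^ q ≤ ∫⁻ y, k (x - y) * φ y ^ q ∂μ := by
    intro x
    refine (lintegral_mul_rpow_le hq (hks x) hφ).trans (mul_le_of_le_one_left zero_le ?_)
    rw [lintegral_sub_left_eq_self k x]
    exact ENNReal.rpow_le_one hk1 (by linarith)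
  set A := ∫⁻ y, φ y ^ q ∂μ
  have h2 : ∀ x, (∫⁻ y, k (x - y) * φ y ∂μ) ^ r
      ≤ (D * A) ^ ((r - q) / q) * ∫⁻ y, k (x - y) * φ y ^ q ∂μ := by
    intro x
    have h3 : (∫⁻ y, k (x - y) * φ y ∂μ) ^ q ≤ D * A := by
      refine (h1 x).trans ?_
      rw [← lintegral_const_mul _ (hφ.pow_const q)]
      exact lintegral_mono fun y => mul_le_mul_left (hD _) _
    calc (∫⁻ y, k (x - y) * φ y ∂μ) ^ r
        = ((∫⁻ y, k (x - y) * φ y ∂μ) ^ q) ^ ((r - q) / q) * (∫⁻ y, k (x - y) * φ y ∂μ) ^ q := by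
          rw [← ENNReal.rpow_mul, mul_div_cancel₀ _ hq0.ne',
            ← ENNReal.rpow_add_of_nonneg _ _ (by linarith) hq0.le, sub_add_cancel]
      _ ≤ _ := mul_le_mul' (ENNReal.rpow_le_rpow h3 (div_nonneg (by linarith) hq0.le)) (h1 x)
  have hjm : Measurable fun p : G × G => k (p.1 - p.2) * φ p.2 ^ q :=
    (hk.comp measurable_sub).mul ((hφ.comp measurable_snd).pow_const q)
  refine (lintegral_mono h2).trans ?_
  rw [lintegral_const_mul _ hjm.lintegral_prod_right', lintegral_lintegral_swap hjm.aemeasurable]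
  have h4 : ∀ y, ∫⁻ x, k (x - y) * φ y ^ q ∂μ ≤ φ y ^ q := by
    intro y
    have hky : Measurable fun x => k (x - y) := hk.comp (measurable_id.sub measurable_const)
    rw [lintegral_mul_const _ hky]
    refine mul_le_of_le_one_left zero_le ?_
    rwa [lintegral_sub_right_eq_self k y]
  refine (mul_le_mul_right (lintegral_mono h4) _).trans (le_of_eq ?_)
  change (D * A) ^ ((r - q) / q) * A = _
  rw [ENNReal.mul_rpow_of_nonneg _ _ (div_nonneg (by linarith) hq0.le), mul_assoc]
  congr 1
  conv_lhs => rw [← ENNReal.rpow_one A, ← ENNReal.rpow_mul,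
    ← ENNReal.rpow_add_of_nonneg _ _ (mul_nonneg zero_le_one (div_nonneg (by linarith) hq0.le))
      zero_le_one]
  rw [← ENNReal.rpow_mul]
  congr 1
  field_simp
  ring

/-- The spatial `L^q` norm of a time slice. -/
def sliceNorm {n : ℕ} (q : ℝ) (φ : ℝ × Rn n → ℝ≥0∞) (s : ℝ) : ℝ≥0∞ :=
  (∫⁻ y, φ (s, y) ^ q) ^ (1 / q)

theorem measurable_sliceNorm {n : ℕ} (q : ℝ) {φ : ℝ × Rn n → ℝ≥0∞} (hφ : Measurable φ) :
    Measurable (sliceNorm q φ) :=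
  (hφ.pow_const q).lintegral_prod_right'.pow_const _

/-- The `L^q → L^r` smoothing factor for a kernel bounded by `C t^{-n/(2α)}`. -/
def smoothFactor (n : ℕ) (α C q r t : ℝ) : ℝ≥0∞ :=
  ENNReal.ofReal (C * t ^ (-(n / (2 * α)))) ^ ((r - q) / q)

theorem measurable_smoothFactor (n : ℕ) (α C q r : ℝ) : Measurable (smoothFactor n α C q r) := by
  unfold smoothFactor
  fun_prop

section

variable {n : ℕ} {α C q r : ℝ} {τ : Measure ℝ} [SFinite τ] {φ : ℝ × Rn n → ℝ≥0∞}

theorem lintegral_heatDens_slice_rpow_le (hn : 1 ≤ n) (hα : 0 < α ∧ α ≤ 1)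
    (hC : ∀ t > 0, ∀ x, gKer n α t x ≤ C * t ^ (-(n / (2 * α)))) (hφ : Measurable φ)
    (hq : 1 ≤ q) (hr : q ≤ r) (t s : ℝ) :
    ∫⁻ x, (∫⁻ y, heatDens n α 0 (t, x) (s, y) * φ (s, y)) ^ r
      ≤ (Iio t).indicator (fun s => smoothFactor n α C q r (t - s)) s * sliceNorm q φ s ^ r := by
  by_cases hs : s < t ∧ t ≤ 1
  · rw [indicator_of_mem (by exact hs.1)]
    simp only [heatDens, if_pos hs, Nat.cast_zero, neg_zero, zero_mul, Real.exp_zero,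
      ENNReal.ofReal_one, one_mul]
    exact lintegral_conv_rpow_le (k := fun x => ENNReal.ofReal (gKer n α (t - s) x))
      (measurable_gKer n α).of_uncurry_left.ennreal_ofReal (hφ.comp measurable_prodMk_left)
      (lintegral_gKer_le_one hn hα (sub_pos.2 hs.1))
      (fun x => ENNReal.ofReal_le_ofReal (hC _ (sub_pos.2 hs.1) x)) hq hr
  · have hr0 : 0 < r := by linarith
    simp only [heatDens, if_neg hs, zero_mul, lintegral_zero, ENNReal.zero_rpow_of_pos hr0]
    exact zero_le

theorem lintegral_heatPot_slice_rpow_le (hn : 1 ≤ n) (hα : 0 < α ∧ α ≤ 1)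
    (hC : ∀ t > 0, ∀ x, gKer n α t x ≤ C * t ^ (-(n / (2 * α)))) (hφ : Measurable φ)
    (hq : 1 ≤ q) (hr : q ≤ r) (hN : ∫⁻ s, (sliceNorm q φ s + 1) ∂τ ≠ ∞) (t : ℝ) :
    ∫⁻ x, (∫⁻ w, φ w ∂heatPot n α τ 0 (t, x)) ^ r
      ≤ (∫⁻ s, (sliceNorm q φ s + 1) ∂τ) ^ (r - 1) *
        ∫⁻ s, (Iio t).indicator (fun s => smoothFactor n α C q r (t - s)) s
          * (sliceNorm q φ s + 1) ∂τ := by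
  have hr1 : 1 ≤ r := hq.trans hr
  set w : ℝ → ℝ≥0∞ := fun s => sliceNorm q φ s + 1 with hwdef
  have hw : Measurable w := (measurable_sliceNorm q hφ).add measurable_const
  have hw0 : ∀ s, w s ≠ 0 := fun s => by simp [hwdef]
  have hwt : ∀ᵐ s ∂τ, w s < ∞ := ae_lt_top hw hN
  set B : ℝ → Rn n → ℝ≥0∞ := fun s x => ∫⁻ y, heatDens n α 0 (t, x) (s, y) * φ (s, y) with hB
  have hBm : Measurable (Function.uncurry B) := by
    refine Measurable.lintegral_prod_right' (f := fun p : (ℝ × Rn n) × Rn n =>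
      heatDens n α 0 (t, p.1.2) (p.1.1, p.2) * φ (p.1.1, p.2)) ?_
    refine Measurable.mul ?_ (hφ.comp (by fun_prop))
    exact (measurable_heatDens n α 0).comp (f := fun p : (ℝ × Rn n) × Rn n =>
      ((t, p.1.2), (p.1.1, p.2))) (by fun_prop)
  have hdiv : Measurable fun p : Rn n × ℝ => w p.2 * (B p.2 p.1 / w p.2) ^ r :=
    (hw.comp measurable_snd).mul
      (((hBm.comp measurable_swap).div (hw.comp measurable_snd)).pow_const r)
  have h1 : ∀ x, (∫⁻ w, φ w ∂heatPot n α τ 0 (t, x)) ^ r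
      ≤ (∫⁻ s, w s ∂τ) ^ (r - 1) * ∫⁻ s, w s * (B s x / w s) ^ r ∂τ := by
    intro x
    have hBx : Measurable fun s => B s x := hBm.of_uncurry_right
    refine le_trans (le_of_eq ?_) (lintegral_mul_rpow_le hr1 hw (hBx.div hw))
    congr 1
    rw [lintegral_heatPot _ _ _ _ _ hφ, lintegral_prod _
      ((measurable_heatDens n α 0).of_uncurry_left.fun_mul hφ).aemeasurable]
    refine lintegral_congr_ae ?_
    filter_upwards [hwt] with s hs
    exact (ENNReal.mul_div_cancel (hw0 s) hs.ne).symm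
  refine (lintegral_mono h1).trans ?_
  rw [lintegral_const_mul _ hdiv.lintegral_prod_right',
    lintegral_lintegral_swap hdiv.aemeasurable]
  refine mul_le_mul_right (lintegral_mono_ae ?_) _
  filter_upwards [hwt] with s hs
  have hBs : Measurable (B s) := hBm.of_uncurry_left
  have hr0 : 0 ≤ r := by linarith
  simp only [div_eq_mul_inv, ENNReal.mul_rpow_of_nonneg _ _ hr0]
  rw [lintegral_const_mul _ ((hBs.pow_const r).mul_const _), lintegral_mul_const _ (hBs.pow_const r),
    mul_comm]
  refine mul_le_mul_left ?_ _
  rw [ENNReal.inv_rpow, ← div_eq_mul_inv, ENNReal.div_le_iff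
    (ENNReal.rpow_pos (pos_iff_ne_zero.2 (hw0 s)) hs.ne).ne'
    (ENNReal.rpow_ne_top_of_nonneg hr0 hs.ne)]
  refine (lintegral_heatDens_slice_rpow_le hn hα hC hφ hq hr t s).trans ?_
  gcongr
  exact le_self_add

theorem lintegral_heatPot_slice_le (hn : 1 ≤ n) (hα : 0 < α ∧ α ≤ 1) (hφ : Measurable φ)
    (hq : 1 ≤ q) (hN : ∫⁻ s, (sliceNorm q φ s + 1) ∂τ ≠ ∞) (t : ℝ) :
    (∫⁻ x, (∫⁻ w, φ w ∂heatPot n α τ 0 (t, x)) ^ q) ^ (1 / q)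
      ≤ ∫⁻ s, (sliceNorm q φ s + 1) ∂τ := by
  obtain ⟨C, -, hC⟩ := gKer_le hn hα.1
  have h := lintegral_heatPot_slice_rpow_le (τ := τ) hn hα hC hφ hq le_rfl hN t
  have hq0 : 0 < q := by linarith
  rw [one_div, ENNReal.rpow_inv_le_iff hq0]
  refine h.trans ?_
  set W := ∫⁻ s, (sliceNorm q φ s + 1) ∂τ
  calc _ ≤ W ^ (q - 1) * W := by
        refine mul_le_mul_right (lintegral_mono fun s => mul_le_of_le_one_left zero_le ?_) _
        by_cases hs : s ∈ Iio t
        · rw [indicator_of_mem hs]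
          simp [smoothFactor]
        · rw [indicator_of_notMem hs]
          exact zero_le
    _ = W ^ q := by
        nth_rewrite 2 [← ENNReal.rpow_one W]
        rw [← ENNReal.rpow_add_of_nonneg _ _ (by linarith) zero_le_one, sub_add_cancel]

theorem lintegral_smoothFactor_lt_top (hq : 0 < q) (hr : q ≤ r) (hC : 0 ≤ C)
    (hθ : n / (2 * α) * ((r - q) / q) < 1) :
    ∫⁻ t in Ioc 0 1, smoothFactor n α C q r t < ∞ := by
  have he : 0 ≤ (r - q) / q := div_nonneg (by linarith) hq.le
  have hI : IntervalIntegrable (fun t : ℝ => C ^ ((r - q) / q) *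
      t ^ (-(n / (2 * α) * ((r - q) / q)))) volume 0 1 :=
    (intervalIntegral.intervalIntegrable_rpow' (by linarith)).const_mul _
  rw [intervalIntegrable_iff_integrableOn_Ioc_of_le zero_le_one] at hI
  refine lt_of_le_of_lt (le_of_eq ?_) hI.lintegral_lt_top
  refine setLIntegral_congr_fun measurableSet_Ioc fun t ht => ?_
  have ht0 : 0 < t := ht.1
  simp only [smoothFactor]
  rw [ENNReal.ofReal_rpow_of_nonneg (by positivity) he, Real.mul_rpow hC (by positivity),
    ← Real.rpow_mul ht0.le, neg_mul]

theorem lintegral_heatPot_rpow_lt_top (hn : 1 ≤ n) (hα : 0 < α ∧ α ≤ 1) (hφ : Measurable φ)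
    (hq : 1 ≤ q) (hr : q ≤ r) (hθ : n / (2 * α) * ((r - q) / q) < 1) (hτ : ∀ᵐ s ∂τ, 0 ≤ s)
    (hN : ∫⁻ s, (sliceNorm q φ s + 1) ∂τ ≠ ∞) :
    ∫⁻ z, (∫⁻ w, φ w ∂heatPot n α τ 0 z) ^ r ∂unitTime.prod volume < ∞ := by
  obtain ⟨C, hC0, hC⟩ := gKer_le hn hα.1
  have hr1 : 1 ≤ r := hq.trans hr
  rw [lintegral_prod _ (hφ.lintegral_kernel.pow_const r).aemeasurable]
  set W := ∫⁻ s, (sliceNorm q φ s + 1) ∂τ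
  set D := smoothFactor n α C q r with hD
  have hDm : Measurable D := measurable_smoothFactor n α C q r
  have hW : W ^ (r - 1) ≠ ∞ := ENNReal.rpow_ne_top_of_nonneg (by linarith) hN
  have hNm : Measurable fun s => sliceNorm q φ s + 1 :=
    (measurable_sliceNorm q hφ).add measurable_const
  refine (lintegral_mono fun t =>
    lintegral_heatPot_slice_rpow_le (τ := τ) hn hα hC hφ hq hr hN t).trans_lt ?_
  rw [lintegral_const_mul' _ _ hW]
  refine ENNReal.mul_lt_top hW.lt_top ?_
  have hmeas : Measurable fun p : ℝ × ℝ => (Ioc (0 : ℝ) 1).indicator D (p.1 - p.2)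
      * (sliceNorm q φ p.2 + 1) :=
    ((hDm.indicator measurableSet_Ioc).comp measurable_sub).mul (hNm.comp measurable_snd)
  have hle : ∫⁻ t in Ioc 0 1, ∫⁻ s, (Iio t).indicator (fun s => D (t - s)) s
      * (sliceNorm q φ s + 1) ∂τ ≤ ∫⁻ t in Ioc 0 1, ∫⁻ s, (Ioc (0 : ℝ) 1).indicator D (t - s)
      * (sliceNorm q φ s + 1) ∂τ := by
    refine setLIntegral_mono' measurableSet_Ioc fun t ht => lintegral_mono_ae ?_
    filter_upwards [hτ] with s hs
    gcongr
    by_cases hst : s ∈ Iio t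
    · have hst' : s < t := hst
      have hmem : t - s ∈ Ioc (0 : ℝ) 1 := ⟨by linarith, by linarith [ht.2]⟩
      rw [indicator_of_mem hst, indicator_of_mem hmem]
    · rw [indicator_of_notMem hst]
      exact zero_le
  refine hle.trans_lt ?_
  rw [lintegral_lintegral_swap hmeas.aemeasurable]
  have hle2 : ∀ s, ∫⁻ t in Ioc 0 1, (Ioc (0 : ℝ) 1).indicator D (t - s) * (sliceNorm q φ s + 1)
      ≤ (∫⁻ t in Ioc 0 1, D t) * (sliceNorm q φ s + 1) := by
    intro s
    have hm : Measurable fun t => (Ioc (0 : ℝ) 1).indicator D (t - s) :=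
      (hDm.indicator measurableSet_Ioc).comp (measurable_id.sub measurable_const)
    rw [lintegral_mul_const _ hm]
    refine mul_le_mul_left ?_ _
    refine (setLIntegral_le_lintegral _ _).trans (le_of_eq ?_)
    rw [lintegral_sub_right_eq_self, lintegral_indicator measurableSet_Ioc]
  refine (lintegral_mono hle2).trans_lt ?_
  rw [lintegral_const_mul _ hNm]
  exact ENNReal.mul_lt_top (lintegral_smoothFactor_lt_top (by linarith) hr hC0.le hθ) hN.lt_top

theorem lintegral_heatDens_left_le (hn : 1 ≤ n) (hα : 0 < α ∧ α ≤ 1) (w : ℝ × Rn n) :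
    ∫⁻ z, heatDens n α 0 z w ∂unitTime.prod volume ≤ 1 := by
  rw [lintegral_prod _ (measurable_heatDens n α 0).of_uncurry_right.aemeasurable]
  have h : ∀ t, ∫⁻ x, heatDens n α 0 (t, x) w ≤ 1 := by
    intro t
    by_cases ht : w.1 < t
    · have h1 := lintegral_gKer_le_one hn hα (sub_pos.2 ht)
      rw [← lintegral_sub_right_eq_self _ w.2] at h1
      refine le_trans (lintegral_mono fun x => ?_) h1
      unfold heatDens
      split_ifs
      · simp
      · exact zero_le
    · simp [heatDens, ht]
  refine (lintegral_mono h).trans ?_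
  simp

theorem lintegral_lintegral_heatPot_le (hn : 1 ≤ n) (hα : 0 < α ∧ α ≤ 1) (hφ : Measurable φ) :
    ∫⁻ z, ∫⁻ w, φ w ∂heatPot n α unitTime 0 z ∂unitTime.prod volume
      ≤ ∫⁻ w, φ w ∂unitTime.prod volume := by
  have hm : Measurable fun p : (ℝ × Rn n) × (ℝ × Rn n) => heatDens n α 0 p.1 p.2 * φ p.2 :=
    (measurable_heatDens n α 0).mul (hφ.comp measurable_snd)
  simp only [lintegral_heatPot _ _ _ _ _ hφ]
  rw [lintegral_lintegral_swap hm.aemeasurable]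
  refine lintegral_mono fun w => ?_
  rw [lintegral_mul_const _ (measurable_heatDens n α 0).of_uncurry_right]
  exact mul_le_of_le_one_left zero_le (lintegral_heatDens_left_le hn hα w)

end

section

variable {n : ℕ} {α : ℝ}

theorem heatDens_lt_top (k : ℕ) (z w : ℝ × Rn n) : heatDens n α k z w < ∞ := by
  unfold heatDens
  split_ifs
  · exact ENNReal.mul_lt_top ENNReal.ofReal_lt_top ENNReal.ofReal_lt_top
  · exact ENNReal.zero_lt_top

theorem toReal_heatDens (hn : 1 ≤ n) (hα : 0 < α ∧ α ≤ 1) {z w : ℝ × Rn n}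
    (h : w.1 < z.1 ∧ z.1 ≤ 1) :
    (heatDens n α 0 z w).toReal = gKer n α (z.1 - w.1) (z.2 - w.2) := by
  simp [heatDens, if_pos h, ENNReal.toReal_ofReal (gKer_nonneg hn hα (sub_pos.2 h.1) _)]

theorem integrable_heatPot_iff (τ : Measure ℝ) [SFinite τ] (k : ℕ) (z : ℝ × Rn n)
    (h : ℝ × Rn n → ℝ) : Integrable h (heatPot n α τ k z) ↔
      Integrable (fun w => (heatDens n α k z w).toReal * h w) (τ.prod volume) := by
  rw [heatPot_apply, integrable_withDensity_iff_integrable_smul'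
    (measurable_heatDens n α k).of_uncurry_left (Eventually.of_forall (heatDens_lt_top k z))]
  rfl

theorem integral_heatPot (τ : Measure ℝ) [SFinite τ] (k : ℕ) (z : ℝ × Rn n)
    (h : ℝ × Rn n → ℝ) : ∫ w, h w ∂heatPot n α τ k z =
      ∫ w, (heatDens n α k z w).toReal * h w ∂τ.prod volume := by
  rw [heatPot_apply, integral_withDensity_eq_integral_toReal_smul
    (measurable_heatDens n α k).of_uncurry_left (Eventually.of_forall (heatDens_lt_top k z))]
  rfl

theorem unitTime_prod : unitTime.prod (volume : Measure (Rn n))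
    = (volume.prod volume).restrict (Ioc 0 1 ×ˢ univ) := by
  rw [← Measure.prod_restrict, Measure.restrict_univ]

theorem toReal_heatDens_mul_ae_eq (hn : 1 ≤ n) (hα : 0 < α ∧ α ≤ 1) {t : ℝ}
    (ht : t ∈ Ioc (0 : ℝ) 1) (x : Rn n) (h : ℝ × Rn n → ℝ) :
    (fun w => (heatDens n α 0 (t, x) w).toReal * h w) =ᵐ[unitTime.prod volume]
      (Ioc 0 t ×ˢ univ).indicator (fun w => gKer n α (t - w.1) (x - w.2) * h w) := by
  have h1 : ∀ᵐ s ∂unitTime, s ∈ Ioc (0 : ℝ) 1 ∧ s ≠ t :=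
    (ae_restrict_mem measurableSet_Ioc).and (Measure.ae_ne _ t)
  filter_upwards [Measure.quasiMeasurePreserving_fst.ae h1] with w ⟨hw, hwt⟩
  by_cases hlt : w.1 < t
  · have hmem : w ∈ Ioc 0 t ×ˢ (univ : Set (Rn n)) := ⟨⟨hw.1, hlt.le⟩, mem_univ _⟩
    rw [indicator_of_mem hmem, toReal_heatDens hn hα ⟨hlt, ht.2⟩]
  · have hmem : w ∉ Ioc 0 t ×ˢ (univ : Set (Rn n)) := fun h' =>
      hlt (lt_of_le_of_ne h'.1.2 hwt)
    rw [indicator_of_notMem hmem, heatDens, if_neg fun h' => hlt h'.1, ENNReal.toReal_zero,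
      zero_mul]

theorem integrable_heatPot_unitTime_iff (hn : 1 ≤ n) (hα : 0 < α ∧ α ≤ 1) {t : ℝ}
    (ht : t ∈ Ioc (0 : ℝ) 1) (x : Rn n) (h : ℝ × Rn n → ℝ) :
    Integrable h (heatPot n α unitTime 0 (t, x)) ↔
      IntegrableOn (fun w => gKer n α (t - w.1) (x - w.2) * h w) (Ioc 0 t ×ˢ univ)
        (volume.prod volume) := by
  have hsub : Ioc 0 t ×ˢ (univ : Set (Rn n)) ⊆ Ioc 0 1 ×ˢ univ :=
    prod_mono (Ioc_subset_Ioc_right ht.2) subset_rfl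
  rw [integrable_heatPot_iff, integrable_congr (toReal_heatDens_mul_ae_eq hn hα ht x h),
    integrable_indicator_iff (measurableSet_Ioc.prod MeasurableSet.univ), unitTime_prod,
    IntegrableOn, Measure.restrict_restrict (measurableSet_Ioc.prod MeasurableSet.univ),
    inter_eq_left.2 hsub, IntegrableOn]

theorem integral_heatPot_unitTime (hn : 1 ≤ n) (hα : 0 < α ∧ α ≤ 1) {t : ℝ}
    (ht : t ∈ Ioc (0 : ℝ) 1) (x : Rn n) {h : ℝ × Rn n → ℝ}
    (hInt : Integrable h (heatPot n α unitTime 0 (t, x))) :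
    ∫ w, h w ∂heatPot n α unitTime 0 (t, x)
      = ∫ s in Ioc 0 t, conv n (gKer n α (t - s)) (fun y => h (s, y)) x := by
  have hsub : Ioc 0 t ×ˢ (univ : Set (Rn n)) ⊆ Ioc 0 1 ×ˢ univ :=
    prod_mono (Ioc_subset_Ioc_right ht.2) subset_rfl
  rw [integral_heatPot, integral_congr_ae (toReal_heatDens_mul_ae_eq hn hα ht x h),
    integral_indicator (measurableSet_Ioc.prod MeasurableSet.univ), unitTime_prod,
    Measure.restrict_restrict (measurableSet_Ioc.prod MeasurableSet.univ),
    inter_eq_left.2 hsub, setIntegral_prod _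
      ((integrable_heatPot_unitTime_iff hn hα ht x h).1 hInt)]
  simp only [Measure.restrict_univ, conv]

theorem integrable_heatPot_dirac_iff (hn : 1 ≤ n) (hα : 0 < α ∧ α ≤ 1) {t : ℝ}
    (ht : t ∈ Ioc (0 : ℝ) 1) (x : Rn n) {h : ℝ × Rn n → ℝ} (hm : Measurable h) :
    Integrable h (heatPot n α (Measure.dirac 0) 0 (t, x)) ↔
      Integrable (fun y => gKer n α t (x - y) * h (0, y)) := by
  rw [integrable_heatPot_iff, Measure.dirac_prod, integrable_map_measure
    ((measurable_heatDens n α 0).of_uncurry_left.ennreal_toReal.fun_mul hm).aestronglyMeasurable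
    measurable_prodMk_left.aemeasurable]
  refine iff_of_eq (congrArg (Integrable · volume) (funext fun y => ?_))
  rw [Function.comp_apply, toReal_heatDens hn hα (by exact ht), sub_zero]

theorem integral_heatPot_dirac (hn : 1 ≤ n) (hα : 0 < α ∧ α ≤ 1) {t : ℝ}
    (ht : t ∈ Ioc (0 : ℝ) 1) (x : Rn n) {h : ℝ × Rn n → ℝ} (hm : Measurable h) :
    ∫ w, h w ∂heatPot n α (Measure.dirac 0) 0 (t, x)
      = conv n (gKer n α t) (fun y => h (0, y)) x := by
  rw [integral_heatPot, Measure.dirac_prod, integral_map measurable_prodMk_left.aemeasurable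
    ((measurable_heatDens n α 0).of_uncurry_left.ennreal_toReal.fun_mul hm).aestronglyMeasurable]
  refine integral_congr_ae (Eventually.of_forall fun y => ?_)
  simp only
  rw [toReal_heatDens hn hα (by exact ht), sub_zero]

/-- The time measure carrying both the source term and the initial datum. -/
abbrev dataTime : Measure ℝ := unitTime + Measure.dirac 0

theorem heatPot_dataTime (z : ℝ × Rn n) : heatPot n α dataTime 0 z
    = heatPot n α unitTime 0 z + heatPot n α (Measure.dirac 0) 0 z := by
  rw [heatPot_apply, heatPot_apply, heatPot_apply, Measure.add_prod, withDensity_add_measure]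

/-- The source term, with the initial datum placed at times `s ≤ 0`. -/
def dataFun (f : ℝ → Rn n → ℝ) (u₀ : Rn n → ℝ) (w : ℝ × Rn n) : ℝ :=
  if w.1 ≤ 0 then u₀ w.2 else f w.1 w.2

theorem measurable_dataFun {f : ℝ → Rn n → ℝ} {u₀ : Rn n → ℝ}
    (hf : Measurable (Function.uncurry f)) (hu₀ : Measurable u₀) :
    Measurable (dataFun f u₀) :=
  Measurable.ite (measurableSet_le measurable_fst measurable_const)
    (hu₀.comp measurable_snd) hf

theorem isMildSol0_iff (hn : 1 ≤ n) (hα : 0 < α ∧ α ≤ 1) {b : ℕ} {f : ℝ → Rn n → ℝ}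
    {u₀ : Rn n → ℝ} (hf : Measurable (Function.uncurry f)) (hu₀ : Measurable u₀)
    (hInt : ∀ᵐ z ∂unitTime.prod volume, Integrable (dataFun f u₀) (heatPot n α dataTime 0 z))
    (u : ℝ → Rn n → ℝ) :
    IsMildSol0 n α b (Ioc 0 1) f u₀ u ↔ ∀ᵐ z ∂unitTime.prod volume,
      Integrable (fun w => |Function.uncurry u w| ^ b * Function.uncurry u w)
        (heatPot n α unitTime 0 z) ∧
      Function.uncurry u z + ∫ w, |Function.uncurry u w| ^ b * Function.uncurry u w
        ∂heatPot n α unitTime 0 z = ∫ w, dataFun f u₀ w ∂heatPot n α dataTime 0 z := by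
  refine eventually_congr ?_
  have hmem : ∀ᵐ z ∂unitTime.prod (volume : Measure (Rn n)), z.1 ∈ Ioc (0 : ℝ) 1 :=
    Measure.quasiMeasurePreserving_fst.ae (ae_restrict_mem measurableSet_Ioc)
  have hF := measurable_dataFun hf hu₀
  filter_upwards [hInt, hmem] with ⟨t, x⟩ hz ht
  rw [heatPot_dataTime, integrable_add_measure] at hz
  rw [heatPot_dataTime, integral_add_measure hz.1 hz.2, integral_heatPot_dirac hn hα ht x hF,
    integral_heatPot_unitTime hn hα ht x hz.1]
  have h1 := (integrable_heatPot_unitTime_iff hn hα ht x _).1 hz.1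
  have h2 := (integrable_heatPot_dirac_iff hn hα ht x hF).1 hz.2
  have hd0 : ∀ y, dataFun f u₀ (0, y) = u₀ y := fun y => if_pos le_rfl
  have hds : ∀ s > 0, ∀ y, dataFun f u₀ (s, y) = f s y := fun s hs y => if_neg (not_le.2 hs)
  have h1' : IntegrableOn (fun w : ℝ × Rn n => gKer n α (t - w.1) (x - w.2) * f w.1 w.2)
      (Ioc 0 t ×ˢ univ) (volume.prod volume) :=
    h1.congr_fun (fun w hw => by simp only [← hds w.1 hw.1.1 w.2])
      (measurableSet_Ioc.prod MeasurableSet.univ)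
  have hc : ∫ s in Ioc 0 t, conv n (gKer n α (t - s)) (fun y => dataFun f u₀ (s, y)) x
      = ∫ s in Ioc 0 t, conv n (gKer n α (t - s)) (f s) x :=
    setIntegral_congr_fun measurableSet_Ioc fun s hs => by simp only [hds s hs.1]
  simp only [hd0] at h2
  simp only [hd0, hc]
  constructor
  · rintro ⟨-, -, h3, h4⟩
    have h3' := (integrable_heatPot_unitTime_iff hn hα ht x
      (fun w => |Function.uncurry u w| ^ b * Function.uncurry u w)).2 h3
    refine ⟨h3', ?_⟩
    rw [integral_heatPot_unitTime hn hα ht x h3']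
    simp only [Function.uncurry_apply_pair]
    rw [h4]
    ring
  · rintro ⟨h3, h4⟩
    refine ⟨h2, h1', (integrable_heatPot_unitTime_iff hn hα ht x _).1 h3, ?_⟩
    rw [integral_heatPot_unitTime hn hα ht x h3] at h4
    simp only [Function.uncurry_apply_pair] at h4
    linarith

theorem ENNReal.pow_le_one_add_rpow {m : ℕ} {r : ℝ} (hr : m ≤ r) (a : ℝ≥0∞) :
    a ^ m ≤ 1 + a ^ r := by
  rcases le_total a 1 with h | h
  · exact (pow_le_one₀ zero_le h).trans le_self_add
  · rw [← ENNReal.rpow_natCast]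
    exact (ENNReal.rpow_le_rpow_of_exponent_le h hr).trans le_add_self

theorem eNormT_le_of_eLpNorm_le {p : ℝ → ℝ} {q : ℝ} (hp : ∀ t, 0 ≤ t → 0 ≤ p t)
    {u : ℝ → Rn n → ℝ} {R : ℝ≥0∞} (hR : 0 < R)
    (hu : ∀ᵐ t ∂unitTime, eLpNorm (u t) (ENNReal.ofReal q) volume ≤ R) :
    eNormT n p q 1 u ≤ R := by
  refine sInf_le ⟨hR, ?_⟩
  calc _ ≤ ∫⁻ _ in Ioc (0 : ℝ) 1, 1 := by
        refine lintegral_mono_ae ?_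
        filter_upwards [hu, ae_restrict_mem measurableSet_Ioc] with t ht ht0
        exact ENNReal.rpow_le_one (ENNReal.div_le_of_le_mul (by rwa [one_mul])) (hp t ht0.1.le)
    _ ≤ 1 := by simp

theorem lintegral_sliceNorm_dataFun_ne_top {q : ℝ} (hn : 1 ≤ n) (hq : 1 < q) {qb : Rn n → ℝ}
    (hqb : IsPembq n q qb) {f : ℝ → Rn n → ℝ} {u₀ : Rn n → ℝ} (hu₀ : luxNormR volume qb u₀ < ∞)
    (hf : ∫⁻ s in Ioi (0 : ℝ), luxNormR volume qb (f s) < ∞) :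
    ∫⁻ s, (sliceNorm q (fun w => ‖dataFun f u₀ w‖ₑ) s + 1) ∂dataTime ≠ ∞ := by
  obtain ⟨C, hC, hemb⟩ := hqb.exists_le_luxNorm hn hq
  have h0 : sliceNorm q (fun w => ‖dataFun f u₀ w‖ₑ) 0 ≤ C * luxNormR volume qb u₀ := by
    refine le_trans (le_of_eq ?_) (hemb _)
    simp only [sliceNorm, dataFun, le_refl, if_true, Real.enorm_eq_ofReal_abs]
  have hs : ∀ s > 0, sliceNorm q (fun w => ‖dataFun f u₀ w‖ₑ) s
      ≤ C * luxNormR volume qb (f s) := by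
    intro s hs
    refine le_trans (le_of_eq ?_) (hemb _)
    simp only [sliceNorm, dataFun, not_le.2 hs, if_false, Real.enorm_eq_ofReal_abs]
  rw [lintegral_add_right _ measurable_const, lintegral_add_measure, lintegral_dirac,
    lintegral_const]
  refine ENNReal.add_ne_top.2 ⟨ENNReal.add_ne_top.2 ⟨ne_top_of_le_ne_top ?_ (?_ : _ ≤
    ∫⁻ s in Ioi (0 : ℝ), C * luxNormR volume qb (f s)),
    (h0.trans_lt (ENNReal.mul_lt_top hC.lt_top hu₀)).ne⟩, by simp⟩
  · rw [lintegral_const_mul' _ _ hC]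
    exact (ENNReal.mul_lt_top hC.lt_top hf).ne
  · refine (setLIntegral_mono' measurableSet_Ioc fun s h => hs s h.1).trans ?_
    exact lintegral_mono_set Ioc_subset_Ioi_self

end

end

/-- Local well-posedness (γ = 0) in `L^{p(·)}([0,T], L^q(ℝ^n))`. -/
theorem stmt2 (n b : ℕ) (hn : 1 ≤ n) (hb : 1 ≤ b) (α : ℝ) (hα : 1/2 < α ∧ α ≤ 1)
    (p : ℝ → ℝ) (hplog : IsPLog (Ici (0:ℝ)) p)
    (hpminus : ∃ pm : ℝ, (b:ℝ) + 1 < pm ∧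
      ∀ᵐ t ∂(volume.restrict (Ici (0:ℝ))), pm ≤ p t)
    (hpplus : ∃ M : ℝ, ∀ᵐ t ∂(volume.restrict (Ici (0:ℝ))), p t ≤ M)
    (q : ℝ) (hq1 : 1 < q) (hq : (n:ℝ) * b / (2 * α) < q)
    (hq2 : ∀ᵐ t ∂(volume.restrict (Ici (0:ℝ))),
      (b:ℝ) / p t + (n:ℝ) * b / (2 * α * q) < 1 ∧
      1 ≤ ((b:ℝ) + 1) / p t + (n:ℝ) * b / (2 * α * q))
    (qb : Rn n → ℝ) (hqb : IsPembq n q qb)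
    (u₀ : Rn n → ℝ) (hu₀m : Measurable u₀) (hu₀ : luxNormR volume qb u₀ < ⊤)
    (f : ℝ → Rn n → ℝ) (hfm : Measurable (Function.uncurry f))
    (hf : ∫⁻ s in Ioi (0:ℝ), luxNormR volume qb (f s) < ⊤) :
    ∃ T > (0:ℝ), ∃ R > (0:ℝ), ∃ u : ℝ → Rn n → ℝ, Measurable (Function.uncurry u) ∧
      eNormT n p q T u ≤ ENNReal.ofReal R ∧
      IsMildSol0 n α b (Ioc 0 T) f u₀ u ∧
      ∀ v : ℝ → Rn n → ℝ, Measurable (Function.uncurry v) →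
        eNormT n p q T v ≤ ENNReal.ofReal R →
        IsMildSol0 n α b (Ioc 0 T) f u₀ v →
        ∀ᵐ tx : ℝ × Rn n ∂((volume.restrict (Ioc (0:ℝ) T)).prod volume),
          v tx.1 tx.2 = u tx.1 tx.2 := by
  have hα' : 0 < α ∧ α ≤ 1 := ⟨by linarith [hα.1], hα.2⟩
  have hq0 : 0 < q := by linarith
  have hF := measurable_dataFun hfm hu₀m
  have hN := lintegral_sliceNorm_dataFun_ne_top hn hq1 hqb hu₀ hf
  set W := ∫⁻ s, (sliceNorm q (fun w => ‖dataFun f u₀ w‖ₑ) s + 1) ∂dataTime with hW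
  have hunit : ∀ᵐ s ∂unitTime, 0 ≤ s := by
    filter_upwards [ae_restrict_mem measurableSet_Ioc] with s hs using hs.1.le
  have hdata : ∀ᵐ s ∂dataTime, 0 ≤ s :=
    ae_add_measure_iff.2 ⟨hunit, (ae_dirac_iff measurableSet_Ici).2 le_rfl⟩
  set r : ℝ := max q (b + 1) with hr
  have hqr : q ≤ r := le_max_left _ _
  have hbr : ((b + 1 : ℕ) : ℝ) ≤ r := by
    push_cast
    exact le_max_right _ _
  have hn0 : (0 : ℝ) < n := by exact_mod_cast hn
  have hθ : n / (2 * α) * ((r - q) / q) < 1 := by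
    rw [div_mul_div_comm, div_lt_one (mul_pos (by linarith [hα'.1]) hq0)]
    rw [div_lt_iff₀ (by linarith [hα'.1])] at hq
    rcases max_cases q ((b : ℝ) + 1) with h | h
    · rw [hr, h.1, sub_self, mul_zero]
      exact mul_pos (by linarith [hα'.1]) hq0
    · rw [hr, h.1]
      nlinarith
  set Λ : ℝ × Rn n → ENNReal := fun z => ∫⁻ w, ‖dataFun f u₀ w‖ₑ ∂heatPot n α dataTime 0 z with hΛ
  have hΛm : Measurable Λ := hF.enorm.lintegral_kernel
  have hΛint : ∫⁻ z, Λ z ^ r ∂unitTime.prod volume < ⊤ :=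
    lintegral_heatPot_rpow_lt_top hn hα' hF.enorm hq1.le hqr hθ hdata hN
  have hΛfin : ∀ᵐ z ∂unitTime.prod volume, Λ z < ⊤ := by
    filter_upwards [ae_lt_top (hΛm.pow_const r) hΛint.ne] with z hz
    rwa [ENNReal.rpow_lt_top_iff_of_pos (by linarith)] at hz
  have hΛpow : ∀ᵐ z ∂unitTime.prod volume, ∫⁻ x, Λ x ^ (b + 1) ∂heatPot n α unitTime 0 z < ⊤ := by
    have h := (lintegral_lintegral_heatPot_le hn hα' (hΛm.pow_const r)).trans_lt hΛint
    filter_upwards [ae_lt_top (hΛm.pow_const r).lintegral_kernel h.ne] with z hz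
    refine (lintegral_mono fun x => ENNReal.pow_le_one_add_rpow hbr (Λ x)).trans_lt ?_
    rw [lintegral_add_left measurable_const, lintegral_one]
    exact ENNReal.add_lt_top.2 ⟨(heatPot_mass_le hn hα' z).trans_lt ENNReal.one_lt_top, hz⟩
  have hfinK : ProbabilityTheory.IsFiniteKernel (heatPot n α unitTime 0) :=
    ⟨1, ENNReal.one_lt_top, heatPot_mass_le hn hα'⟩
  have Hκ := resolventPair_heatPot hn hα' unitTime hunit
  have hac := heatPot_absolutelyContinuous n α unitTime 0
  obtain ⟨u, hum, hu⟩ := Hκ.exists_solution (resolventPair_heatPot hn hα' dataTime hdata) hac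
    (heatPot_mass_le hn hα') (fun c _ => heatPot_weight hn hα' c) b hF hΛfin hΛpow
  have hInt : ∀ᵐ z ∂unitTime.prod volume,
      Integrable (dataFun f u₀) (heatPot n α dataTime 0 z) := by
    filter_upwards [hΛfin] with z hz using ⟨hF.aestronglyMeasurable, hz⟩
  have hmild := isMildSol0_iff hn hα' (b := b) hfm hu₀m hInt
  refine ⟨1, one_pos, W.toReal + 1, by positivity, Function.curry u,
    by rwa [Function.uncurry_curry], ?_, ?_, fun v hv _ hvs => ?_⟩
  · refine eNormT_le_of_eLpNorm_le (fun t ht => zero_le_one.trans (hplog.2.1 t ht))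
      (ENNReal.ofReal_pos.2 (by positivity)) ?_
    filter_upwards [Measure.ae_ae_of_ae_prod hu] with t ht
    rw [eLpNorm_eq_lintegral_rpow_enorm_toReal (by simpa using hq0) ENNReal.ofReal_ne_top,
      ENNReal.toReal_ofReal hq0.le]
    calc (∫⁻ x, ‖Function.curry u t x‖ₑ ^ q) ^ (1 / q) ≤ (∫⁻ x, Λ (t, x) ^ q) ^ (1 / q) := by
          refine ENNReal.rpow_le_rpow (lintegral_mono_ae ?_) (by positivity)
          filter_upwards [ht] with x hx using ENNReal.rpow_le_rpow hx.1 hq0.le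
      _ ≤ W := lintegral_heatPot_slice_le hn hα' hF.enorm hq1.le hN t
      _ = ENNReal.ofReal W.toReal := (ENNReal.ofReal_toReal hN).symm
      _ ≤ ENNReal.ofReal (W.toReal + 1) := ENNReal.ofReal_le_ofReal (by linarith)
  · rw [hmild, Function.uncurry_curry]
    exact hu.mono fun z hz => hz.2
  · exact Hκ.eq_of_solution hac b hum hv (hu.mono fun z hz => hz.2) ((hmild v).1 hvs)
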